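/- If W is a small extension of a CTM U, then for some ordinal κ ∈ U, W is generated from U by an unbounded subset of κ; moreover κ can be chosen so that (U; ∈) ⊨ 'κ is a cardinal'. -/

import Mathlib

/-!
Common formalization layer for "Small extensions of set-theoretic universes".

We work with `ZFSet`, Mathlib's type of ZFC sets.  A "universe" `V` is a
`ZFSet` which is a (countable) transitive model of ZFC, where satisfaction
of ZFC is spelled out via an explicit first-order syntax `Fm` for languages
whose symbols are named by ZFC sets, together with a Tarskian satisfaction
predicate `Sat`.  TCIs (theories with constraints in interpretation), their
models, the forcings `ℙ(𝔗)`, derivative forcings, generic filters, the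
evaluation map `Eval^V`, local method definitions and the reducibility
relation `≤^M` are all defined below, following the paper.
-/

noncomputable section

namespace SmallExt

open Classical

attribute [local instance] Classical.propDecidable

instance : Nonempty ZFSet := ⟨∅⟩

/-! ### basic coding machinery -/

/-- Kuratowski ordered pair. -/
def opair (a b : ZFSet) : ZFSet := ZFSet.pair a b

/-- First projection of a Kuratowski pair. -/
def zfst (x : ZFSet) : ZFSet := ZFSet.sUnion (ZFSet.sInter x)

/-- Second projection of a Kuratowski pair. -/
def zsnd (x : ZFSet) : ZFSet :=
  ZFSet.sUnion
    (ZFSet.sep (fun y => ZFSet.sUnion x ≠ ZFSet.sInter x → y ∉ ZFSet.sInter x) (ZFSet.sUnion x))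

/-- The `n`-th von Neumann natural, as a ZFC set. -/
def natZ : ℕ → ZFSet
  | 0 => ∅
  | n + 1 => insert (natZ n) (natZ n)

/-- Internal coding of a finite list as an iterated pair (`[a] ↦ a`), so that
`ztuple` of a list of length `n` is a member of the `n`-th cartesian power. -/
def ztuple : List ZFSet → ZFSet
  | [] => ∅
  | [a] => a
  | a :: b :: l => opair a (ztuple (b :: l))

/-- Internal coding of a finite list as an iterated pair, with end marker `∅`. -/
def zlist : List ZFSet → ZFSet
  | [] => ∅
  | a :: l => opair a (zlist l)

/-- `n`-th cartesian power of a ZFC set (with `z^1 = z`, as in the paper). -/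
def ZPow (z : ZFSet) : ℕ → ZFSet
  | 0 => {∅}
  | 1 => z
  | n + 2 => ZFSet.prod z (ZPow z (n + 1))

/-- Decode an internal `n`-tuple into a list. -/
def decodeTuple : ℕ → ZFSet → List ZFSet
  | 0, _ => []
  | 1, t => [t]
  | n + 2, t => zfst t :: decodeTuple (n + 1) (zsnd t)

/-- Image of a ZFC set under an arbitrary (classically definable) function. -/
def zimage (f : ZFSet → ZFSet) (x : ZFSet) : ZFSet :=
  @ZFSet.image f (Classical.allZFSetDefinable _) x

/-- The set of finite subsets of a ZFC set. -/
def finSubsets (A : ZFSet) : ZFSet :=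
  ZFSet.sep (fun p => p.toSet.Finite) (ZFSet.powerset A)

/-- Application of a set-coded function (a set of ordered pairs) to an argument. -/
def iapp (I s : ZFSet) : ZFSet := Classical.epsilon fun v => opair s v ∈ I

/-- `f` is a set-coded function with domain `d`. -/
def IsZFunc (f d : ZFSet) : Prop :=
  (∀ q ∈ f, ∃ s v, q = opair s v ∧ s ∈ d) ∧ ∀ s ∈ d, ∃! v, opair s v ∈ f

/-- `j` is (the code of) an injective function from `a` into `b`. -/
def ZInjFun (j a b : ZFSet) : Prop :=
  IsZFunc j a ∧ (∀ s ∈ a, iapp j s ∈ b) ∧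
    ∀ s ∈ a, ∀ s' ∈ a, iapp j s = iapp j s' → s = s'

/-- Von Neumann ordinals: transitive sets of transitive sets. -/
def IsOrd (x : ZFSet) : Prop := x.IsTransitive ∧ ∀ y ∈ x, ZFSet.IsTransitive y

/-- `t` is the transitive closure of `a`. -/
def IsTrclOf (a t : ZFSet) : Prop :=
  a ⊆ t ∧ t.IsTransitive ∧ ∀ u, a ⊆ u → u.IsTransitive → t ⊆ u

/-! ### first-order syntax over set-named signatures -/

/-- Terms: de Bruijn variables, set parameters, and applications of
function symbols (named by ZFC sets; constants are `0`-ary functions). -/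
inductive Tm : Type 1
  | var : ℕ → Tm
  | param : ZFSet.{0} → Tm
  | func : ZFSet.{0} → (n : ℕ) → (Fin n → Tm) → Tm

/-- First-order formulas over set-named signatures (with equality). -/
inductive Fm : Type 1
  | rel : ZFSet.{0} → (n : ℕ) → (Fin n → Tm) → Fm
  | eq : Tm → Tm → Fm
  | not : Fm → Fm
  | imp : Fm → Fm → Fm
  | all : Fm → Fm
  | ex : Fm → Fm

/-- Derived conjunction. -/
def Fm.and (f g : Fm) : Fm := Fm.not (Fm.imp f (Fm.not g))

/-- Derived disjunction. -/
def Fm.or (f g : Fm) : Fm := Fm.imp (Fm.not f) g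

/-- Derived biconditional. -/
def Fm.iff (f g : Fm) : Fm := Fm.and (Fm.imp f g) (Fm.imp g f)

/-- Evaluation of terms. -/
def Tm.eval (fI : ZFSet → List ZFSet → ZFSet) (v : ℕ → ZFSet) : Tm → ZFSet
  | Tm.var n => v n
  | Tm.param a => a
  | Tm.func s n a => fI s (List.ofFn fun i => Tm.eval fI v (a i))

/-- Prepend a value to a valuation (for quantifiers). -/
def vcons (z : ZFSet) (v : ℕ → ZFSet) : ℕ → ZFSet
  | 0 => z
  | n + 1 => v n

/-- Tarskian satisfaction, parametrized by a class domain `domP`, an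
interpretation `rI` of the relation symbols and `fI` of the function symbols. -/
def Sat (domP : ZFSet → Prop) (rI : ZFSet → List ZFSet → Prop)
    (fI : ZFSet → List ZFSet → ZFSet) : Fm → (ℕ → ZFSet) → Prop
  | Fm.rel s n a, v => rI s (List.ofFn fun i => Tm.eval fI v (a i))
  | Fm.eq t u, v => Tm.eval fI v t = Tm.eval fI v u
  | Fm.not f, v => ¬ Sat domP rI fI f v
  | Fm.imp f g, v => Sat domP rI fI f v → Sat domP rI fI g v
  | Fm.all f, v => ∀ z, domP z → Sat domP rI fI f (vcons z v)
  | Fm.ex f, v => ∃ z, domP z ∧ Sat domP rI fI f (vcons z v)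

/-- Free variables of a term. -/
def Tm.free : Tm → Set ℕ
  | Tm.var n => {n}
  | Tm.param _ => ∅
  | Tm.func _ _ a => {m | ∃ i, m ∈ Tm.free (a i)}

/-- Free variables of a formula (de Bruijn). -/
def Fm.free : Fm → Set ℕ
  | Fm.rel _ _ a => {m | ∃ i, m ∈ Tm.free (a i)}
  | Fm.eq t u => Tm.free t ∪ Tm.free u
  | Fm.not f => Fm.free f
  | Fm.imp f g => Fm.free f ∪ Fm.free g
  | Fm.all f => {m | m + 1 ∈ Fm.free f}
  | Fm.ex f => {m | m + 1 ∈ Fm.free f}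

/-- Set parameters occurring in a term. -/
def Tm.paramSet : Tm → Set ZFSet
  | Tm.var _ => ∅
  | Tm.param a => {a}
  | Tm.func _ _ a => {b | ∃ i, b ∈ Tm.paramSet (a i)}

/-- Set parameters occurring in a formula. -/
def Fm.paramSet : Fm → Set ZFSet
  | Fm.rel _ _ a => {b | ∃ i, b ∈ Tm.paramSet (a i)}
  | Fm.eq t u => Tm.paramSet t ∪ Tm.paramSet u
  | Fm.not f => Fm.paramSet f
  | Fm.imp f g => Fm.paramSet f ∪ Fm.paramSet g
  | Fm.all f => Fm.paramSet f
  | Fm.ex f => Fm.paramSet f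

/-- Quantifier-free formulas. -/
def IsQF : Fm → Prop
  | Fm.rel _ _ _ => True
  | Fm.eq _ _ => True
  | Fm.not f => IsQF f
  | Fm.imp f g => IsQF f ∧ IsQF g
  | Fm.all _ => False
  | Fm.ex _ => False

mutual
  /-- `Π_n` formulas (prenex, with possibly empty quantifier blocks). -/
  inductive IsPi : ℕ → Fm → Prop where
    | qf {f} : IsQF f → IsPi 0 f
    | ofSigma {n f} : IsSigma n f → IsPi (n + 1) f
    | all {n f} : IsPi (n + 1) f → IsPi (n + 1) (Fm.all f)

  /-- `Σ_n` formulas (prenex, with possibly empty quantifier blocks). -/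
  inductive IsSigma : ℕ → Fm → Prop where
    | qf {f} : IsQF f → IsSigma 0 f
    | ofPi {n f} : IsPi n f → IsSigma (n + 1) f
    | ex {n f} : IsSigma (n + 1) f → IsSigma (n + 1) (Fm.ex f)
end

/-! ### the language of set theory and ZFC -/

/-- The name of the membership relation symbol. -/
def memSym : ZFSet := natZ 0

/-- The standard interpretation of `∈`. -/
def memRel : ZFSet → List ZFSet → Prop :=
  fun s args => s = memSym ∧ ∃ a b, args = [a, b] ∧ a ∈ b

/-- Satisfaction in the ∈-structure with domain `M` (a ZFC set). -/
def SatV (M : ZFSet) (f : Fm) (v : ℕ → ZFSet) : Prop :=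
  Sat (· ∈ M) memRel (fun _ _ => ∅) f v

/-- Satisfaction in the ambient (class-sized) ∈-structure. -/
def SatU (f : Fm) (v : ℕ → ZFSet) : Prop :=
  Sat (fun _ => True) memRel (fun _ _ => ∅) f v

/-- Atomic membership formula between de Bruijn variables. -/
def mem2 (i j : ℕ) : Fm := Fm.rel memSym 2 ![Tm.var i, Tm.var j]

/-- Equality between de Bruijn variables. -/
def eq2 (i j : ℕ) : Fm := Fm.eq (Tm.var i) (Tm.var j)

/-- Terms that are plain variables or parameters. -/
def Tm.noFunc : Tm → Prop
  | Tm.var _ => True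
  | Tm.param _ => True
  | Tm.func _ _ _ => False

/-- Formulas of the language of set theory (only `∈`, binary, no function
symbols; parameters allowed). -/
def Fm.memOnly : Fm → Prop
  | Fm.rel s n a => s = memSym ∧ n = 2 ∧ ∀ i, Tm.noFunc (a i)
  | Fm.eq t u => Tm.noFunc t ∧ Tm.noFunc u
  | Fm.not f => Fm.memOnly f
  | Fm.imp f g => Fm.memOnly f ∧ Fm.memOnly g
  | Fm.all f => Fm.memOnly f
  | Fm.ex f => Fm.memOnly f

/-- Iterated universal closure. -/
def allClose : ℕ → Fm → Fm
  | 0, f => f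
  | k + 1, f => allClose k (Fm.all f)

/-- Extensionality. -/
def extAx : Fm :=
  Fm.all (Fm.all (Fm.imp (Fm.all (Fm.iff (mem2 0 2) (mem2 0 1))) (eq2 1 0)))

/-- Pairing. -/
def pairAx : Fm := Fm.all (Fm.all (Fm.ex (Fm.and (mem2 2 0) (mem2 1 0))))

/-- Union. -/
def unionAx : Fm :=
  Fm.all (Fm.ex (Fm.all (Fm.all (Fm.imp (Fm.and (mem2 1 0) (mem2 0 3)) (mem2 1 2)))))

/-- Power set. -/
def powAx : Fm :=
  Fm.all (Fm.ex (Fm.all (Fm.imp (Fm.all (Fm.imp (mem2 0 1) (mem2 0 3))) (mem2 0 1))))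

/-- Infinity. -/
def infAx : Fm :=
  Fm.ex (Fm.and
    (Fm.ex (Fm.and (mem2 0 1) (Fm.all (Fm.not (mem2 0 1)))))
    (Fm.all (Fm.imp (mem2 0 1)
      (Fm.ex (Fm.and (mem2 0 2) (Fm.and (mem2 1 0)
        (Fm.all (Fm.iff (mem2 0 1) (Fm.or (mem2 0 2) (eq2 0 2))))))))))

/-- Foundation. -/
def fundAx : Fm :=
  Fm.all (Fm.imp (Fm.ex (mem2 0 1))
    (Fm.ex (Fm.and (mem2 0 1) (Fm.all (Fm.imp (mem2 0 1) (Fm.not (mem2 0 2)))))))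

/-- Choice (for families of nonempty pairwise disjoint sets). -/
def choiceAx : Fm :=
  Fm.all (Fm.imp
    (Fm.and
      (Fm.all (Fm.imp (mem2 0 1) (Fm.ex (mem2 0 1))))
      (Fm.all (Fm.all (Fm.imp
        (Fm.and (mem2 1 2) (Fm.and (mem2 0 2) (Fm.ex (Fm.and (mem2 0 2) (mem2 0 1)))))
        (eq2 1 0)))))
    (Fm.ex (Fm.all (Fm.imp (mem2 0 2)
      (Fm.ex (Fm.and (mem2 0 1) (Fm.and (mem2 0 2)
        (Fm.all (Fm.imp (Fm.and (mem2 0 2) (mem2 0 3)) (eq2 0 1))))))))))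

/-- Body of a separation instance: `∀x ∃s ∀z (z ∈ s ↔ z ∈ x ∧ φ)`,
where in `φ` the variable `0` is `z`, `2` is `x`, and `≥ 3` are parameters. -/
def sepBody (φ : Fm) : Fm :=
  Fm.all (Fm.ex (Fm.all (Fm.iff (mem2 0 1) (Fm.and (mem2 0 2) φ))))

/-- Body of a collection instance: `∀a ∃b ∀x∈a (∃y φ → ∃y∈b φ)`,
where in `φ` the variable `0` is `y`, `1` is `x`, `3` is `a`, and `≥ 4` are parameters. -/
def repBody (φ : Fm) : Fm :=
  Fm.all (Fm.ex (Fm.all (Fm.imp (mem2 0 2)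
    (Fm.imp (Fm.ex φ) (Fm.ex (Fm.and (mem2 0 2) φ))))))

/-- The ZFC axioms, as a set of sentences of the language of set theory. -/
def ZFCax : Set Fm :=
  {extAx, pairAx, unionAx, powAx, infAx, fundAx, choiceAx} ∪
    {f | ∃ k φ, Fm.memOnly φ ∧ Fm.paramSet φ = ∅ ∧ 1 ∉ Fm.free φ ∧ f = allClose k (sepBody φ)} ∪
    {f | ∃ k φ, Fm.memOnly φ ∧ Fm.paramSet φ = ∅ ∧ 2 ∉ Fm.free φ ∧ f = allClose k (repBody φ)}

/-- `M` is an ∈-model of ZFC. -/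
def SatZFC (M : ZFSet) : Prop := ∀ f ∈ ZFCax, SatV M f (fun _ => ∅)

/-- A transitive model of ZFC. -/
def IsTransModel (M : ZFSet) : Prop := M.IsTransitive ∧ SatZFC M

/-- A countable transitive model of ZFC. -/
def IsCTM (M : ZFSet) : Prop := IsTransModel M ∧ M.toSet.Countable

/-- `W` is an outer model of `U`: both are CTMs, `U ⊆ W`, and they have
the same ordinals. -/
def OuterModel (U W : ZFSet) : Prop :=
  IsCTM U ∧ IsCTM W ∧ U ⊆ W ∧ ∀ y ∈ W, IsOrd y → y ∈ U

/-- `W = U[m]`: `W` is an outer model of `U` and the smallest CTM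
containing `U` as a subset and `m` as an element. -/
def Generates (U m W : ZFSet) : Prop :=
  OuterModel U W ∧ m ∈ W ∧ ∀ W', IsCTM W' → U ⊆ W' → m ∈ W' → W ⊆ W'

/-- `W` is a small extension of `U`. -/
def IsSmallExt (U W : ZFSet) : Prop :=
  OuterModel U W ∧ ∃ m ∈ W, ∀ W', IsCTM W' → U ⊆ W' → m ∈ W' → W ⊆ W'

/-- `k` is a cardinal from the point of view of the model `U`: an ordinal
with no `U`-internal injection into a smaller ordinal. -/
def IsCardinalIn (U k : ZFSet) : Prop :=
  k ∈ U ∧ IsOrd k ∧ ∀ b ∈ k, ¬ ∃ j ∈ U, ZInjFun j k b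

end SmallExt
namespace SmallExt

attribute [local instance] Classical.propDecidable

/-! ### Theories with constraints in interpretation (TCIs) -/

/-- Coding of terms as ZFC sets. -/
def TmCode : Tm → ZFSet
  | Tm.var n => opair (natZ 0) (natZ n)
  | Tm.param a => opair (natZ 1) a
  | Tm.func s n a => opair (natZ 2) (opair s (zlist (List.ofFn fun i => TmCode (a i))))

/-- Coding of formulas as ZFC sets (the code of `¬ f` is `⟨2, code f⟩`). -/
def FmCode : Fm → ZFSet
  | Fm.rel s n a => opair (natZ 0) (opair s (zlist (List.ofFn fun i => TmCode (a i))))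
  | Fm.eq t u => opair (natZ 1) (opair (TmCode t) (TmCode u))
  | Fm.not f => opair (natZ 2) (FmCode f)
  | Fm.imp f g => opair (natZ 3) (opair (FmCode f) (FmCode g))
  | Fm.all f => opair (natZ 4) (FmCode f)
  | Fm.ex f => opair (natZ 5) (FmCode f)

/-- The first component of a TCI `⟨T, σ, U̇, ϑ⟩`: its theory. -/
def tciT (x : ZFSet) : ZFSet := zfst x

/-- The signature `σ` of a TCI. -/
def tciSig (x : ZFSet) : ZFSet := zfst (zsnd x)

/-- The distinguished unary relation symbol `U̇` of a TCI. -/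
def tciUdot (x : ZFSet) : ZFSet := zfst (zsnd (zsnd x))

/-- The interpretation constraint map `ϑ` of a TCI. -/
def tciTheta (x : ZFSet) : ZFSet := zsnd (zsnd (zsnd x))

/-- Symbols are coded as `⟨kind, ⟨arity, name⟩⟩` with kind `0` (relation),
`1` (function) or `2` (constant). -/
def symKind (s : ZFSet) : ZFSet := zfst s

/-- The (internal) arity of a symbol. -/
def symArity (s : ZFSet) : ZFSet := zfst (zsnd s)

/-- A well-formed symbol. -/
def IsSymbol (s : ZFSet) : Prop :=
  ∃ k a nm, s = opair k (opair a nm) ∧ (k = natZ 0 ∨ k = natZ 1 ∨ k = natZ 2) ∧ ∃ n : ℕ, a = natZ n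

/-- Decode an internal von Neumann natural. -/
def zToNat (a : ZFSet) : ℕ := if h : ∃ n, natZ n = a then h.choose else 0

/-- The arity of a symbol, as a natural number. -/
def arityOf (s : ZFSet) : ℕ := zToNat (symArity s)

/-- A term uses only symbols of the signature `σ` (with correct kinds and
arities) and no parameters. -/
def Tm.usesSig (σ : ZFSet) : Tm → Prop
  | Tm.var _ => True
  | Tm.param _ => False
  | Tm.func s n a => s ∈ σ ∧
      ((symKind s = natZ 1 ∧ symArity s = natZ n) ∨ (symKind s = natZ 2 ∧ n = 0)) ∧
      ∀ i, Tm.usesSig σ (a i)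

/-- A formula over the signature `σ` (no parameters). -/
def Fm.usesSig (σ : ZFSet) : Fm → Prop
  | Fm.rel s n a => s ∈ σ ∧ symKind s = natZ 0 ∧ symArity s = natZ n ∧ ∀ i, Tm.usesSig σ (a i)
  | Fm.eq t u => Tm.usesSig σ t ∧ Tm.usesSig σ u
  | Fm.not f => Fm.usesSig σ f
  | Fm.imp f g => Fm.usesSig σ f ∧ Fm.usesSig σ g
  | Fm.all f => Fm.usesSig σ f
  | Fm.ex f => Fm.usesSig σ f

/-- Same as `Fm.usesSig` but allowing set parameters (used for literals
with parameters). -/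
def Tm.usesSigP (σ : ZFSet) : Tm → Prop
  | Tm.var _ => True
  | Tm.param _ => True
  | Tm.func s n a => s ∈ σ ∧
      ((symKind s = natZ 1 ∧ symArity s = natZ n) ∨ (symKind s = natZ 2 ∧ n = 0)) ∧
      ∀ i, Tm.usesSigP σ (a i)

/-- A formula over the signature `σ`, allowing set parameters. -/
def Fm.usesSigP (σ : ZFSet) : Fm → Prop
  | Fm.rel s n a => s ∈ σ ∧ symKind s = natZ 0 ∧ symArity s = natZ n ∧ ∀ i, Tm.usesSigP σ (a i)
  | Fm.eq t u => Tm.usesSigP σ t ∧ Tm.usesSigP σ u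
  | Fm.not f => Fm.usesSigP σ f
  | Fm.imp f g => Fm.usesSigP σ f ∧ Fm.usesSigP σ g
  | Fm.all f => Fm.usesSigP σ f
  | Fm.ex f => Fm.usesSigP σ f

/-- Atomic formulas. -/
def Fm.isAtom : Fm → Prop
  | Fm.rel _ _ _ => True
  | Fm.eq _ _ => True
  | _ => False

/-- `x` is (the code of) a theory with constraints in interpretation:
a tuple `⟨T, σ, U̇, ϑ⟩` where `T` is a set of (codes of) first-order
sentences over `σ`, `U̇` is a unary relation symbol not in `σ`, and `ϑ`
maps each symbol of `σ ∪ {U̇}` to a pair `(y, i)` with `i ∈ {0, 1}` and `y`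
included in a finite cartesian power of the first component `z` of `ϑ(U̇)`,
with the disjointness conditions on the powers of `z` from the paper. -/
def IsTCI (x : ZFSet) : Prop :=
  x = opair (tciT x) (opair (tciSig x) (opair (tciUdot x) (tciTheta x))) ∧
  (∀ s ∈ tciSig x, IsSymbol s) ∧
  IsSymbol (tciUdot x) ∧ symKind (tciUdot x) = natZ 0 ∧ symArity (tciUdot x) = natZ 1 ∧
  tciUdot x ∉ tciSig x ∧
  IsZFunc (tciTheta x) (insert (tciUdot x) (tciSig x)) ∧
  (∀ s ∈ insert (tciUdot x) (tciSig x),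
    ∃ y i, iapp (tciTheta x) s = opair y i ∧ (i = natZ 0 ∨ i = natZ 1) ∧
      ∃ n : ℕ, y ⊆ ZPow (zfst (iapp (tciTheta x) (tciUdot x))) n) ∧
  (∀ n : ℕ, 1 < n →
    zfst (iapp (tciTheta x) (tciUdot x)) ∩
      ZPow (zfst (iapp (tciTheta x) (tciUdot x))) n = ∅) ∧
  (∀ m n : ℕ, 1 < m → m < n →
    ZPow (zfst (iapp (tciTheta x) (tciUdot x))) m ∩
      ZPow (zfst (iapp (tciTheta x) (tciUdot x))) n = ∅) ∧
  (∀ c ∈ tciT x, ∃ f : Fm, FmCode f = c ∧ Fm.free f = ∅ ∧ Fm.usesSig (tciSig x) f)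

/-- Satisfaction in a coded structure `M = ⟨U, I⟩`: relation symbols are
interpreted by `I` via internal tuples, function and constant symbols by the
(graph) values recorded in `I`. -/
def SatStr (M : ZFSet) (f : Fm) : Prop :=
  Sat (· ∈ zfst M) (fun s args => ztuple args ∈ iapp (zsnd M) s)
    (fun s args => if args = [] then iapp (zsnd M) s
      else Classical.epsilon fun b => ztuple (args ++ [b]) ∈ iapp (zsnd M) s)
    f (fun _ => ∅)

/-- The modelling relation `M ⊨* 𝔗` between coded structures and TCIs. -/
def ModelsTCI (M x : ZFSet) : Prop :=
  IsTCI x ∧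
  M = opair (zfst M) (zsnd M) ∧
  IsZFunc (zsnd M) (tciSig x) ∧
  -- the constraint on the universe
  (∀ y i, iapp (tciTheta x) (tciUdot x) = opair y i →
    (i = natZ 0 → zfst M ⊆ y) ∧ (i = natZ 1 → zfst M = y)) ∧
  -- the constraints on the symbols of the signature
  (∀ s ∈ tciSig x, ∀ y i, iapp (tciTheta x) s = opair y i →
    (symKind s = natZ 0 →
      (i = natZ 0 → iapp (zsnd M) s ⊆ y ∩ ZPow (zfst M) (arityOf s)) ∧
      (i = natZ 1 → iapp (zsnd M) s = y ∩ ZPow (zfst M) (arityOf s))) ∧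
    (symKind s = natZ 1 →
      (∀ args : List ZFSet, args.length = arityOf s → (∀ a ∈ args, a ∈ zfst M) →
        ∃! b, b ∈ zfst M ∧ ztuple (args ++ [b]) ∈ iapp (zsnd M) s) ∧
      (i = natZ 0 → iapp (zsnd M) s ⊆ y ∩ ZPow (zfst M) (arityOf s + 1)) ∧
      (i = natZ 1 → iapp (zsnd M) s = y ∩ ZPow (zfst M) (arityOf s + 1))) ∧
    (symKind s = natZ 2 → iapp (zsnd M) s ∈ y ∧ iapp (zsnd M) s ∈ zfst M)) ∧
  -- `M` satisfies the theory
  (∀ c ∈ tciT x, ∀ f : Fm, FmCode f = c → SatStr M f)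

/-- A `Π_n` TCI: one whose theory contains only `Π_n` sentences. -/
def IsPiTCI (n : ℕ) (x : ZFSet) : Prop :=
  IsTCI x ∧ ∀ c ∈ tciT x, ∃ f : Fm, FmCode f = c ∧ IsPi n f

/-- A `Σ_n` TCI: one whose theory contains only `Σ_n` sentences. -/
def IsSigmaTCI (n : ℕ) (x : ZFSet) : Prop :=
  IsTCI x ∧ ∀ c ∈ tciT x, ∃ f : Fm, FmCode f = c ∧ IsSigma n f

/-- A TCI in `V` is consistent iff it has a model in some outer model of `V`. -/
def ConsistentTCI (V x : ZFSet) : Prop :=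
  ∃ W M, OuterModel V W ∧ M ∈ W ∧ ModelsTCI M x

/-! ### the language fragment `𝓛_𝔗` and the diagram `Σ(𝔗, M)` -/

/-- The set of codes of atomic sentences (with parameters) associated to a
symbol `s` of a TCI `x`, as in the proof of Proposition 3.22 of the paper. -/
def codesFor (x s : ZFSet) : ZFSet :=
  if symKind s = natZ 0 then
    zimage (fun t => FmCode (Fm.rel s (arityOf s)
      fun i => Tm.param ((decodeTuple (arityOf s) t).getD i ∅)))
      (zfst (iapp (tciTheta x) s))
  else if symKind s = natZ 1 then
    zimage (fun t => FmCode (Fm.eq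
      (Tm.func s (arityOf s) fun i => Tm.param ((decodeTuple (arityOf s + 1) t).getD i ∅))
      (Tm.param ((decodeTuple (arityOf s + 1) t).getD (arityOf s) ∅))))
      (zfst (iapp (tciTheta x) s))
  else
    zimage (fun a => FmCode (Fm.eq (Tm.func s 0 Fin.elim0) (Tm.param a)))
      (zfst (iapp (tciTheta x) s))

/-- The atomic sentences of `𝓛_𝔗`. -/
def LLbase (x : ZFSet) : ZFSet :=
  ZFSet.sUnion (zimage (fun s => codesFor x s) (insert (tciUdot x) (tciSig x)))

/-- The language fragment `𝓛_𝔗`: atomic sentences with parameters, closed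
under negation. -/
def LL (x : ZFSet) : ZFSet :=
  LLbase x ∪ zimage (fun t => opair (natZ 2) t) (LLbase x)

/-- A literal of `𝓛_𝔗` true in the structure `M` (with `U̇` interpreted as
the domain of `M`). -/
def LitTrue (x M : ZFSet) (f : Fm) : Prop :=
  (∃ a, f = Fm.rel (tciUdot x) 1 (fun _ => Tm.param a) ∧ a ∈ zfst M) ∨
  (∃ a, f = Fm.not (Fm.rel (tciUdot x) 1 (fun _ => Tm.param a)) ∧ a ∉ zfst M) ∨
  (∃ g, (f = g ∨ f = Fm.not g) ∧ Fm.isAtom g ∧ Fm.usesSigP (tciSig x) g ∧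
    (∀ a ∈ Fm.paramSet g, a ∈ zfst M) ∧
    (f = g → SatStr M g) ∧ (f = Fm.not g → ¬ SatStr M g))

/-- The `𝔗`-specific atomic diagram `Σ(𝔗, M)` of a model `M` of `𝔗`. -/
def SigmaSet (x M : ZFSet) : ZFSet :=
  ZFSet.sep (fun c => ∃ f : Fm, FmCode f = c ∧ LitTrue x M f) (LL x)

/-! ### forcing notions and generic filters -/

/-- A forcing notion coded as a pair `⟨P, ≤⟩` of a set of conditions and a
partial order (a set of Kuratowski pairs). -/
def IsForcing (P : ZFSet) : Prop :=
  P = opair (zfst P) (zsnd P) ∧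
  (∀ q ∈ zsnd P, ∃ a ∈ zfst P, ∃ b ∈ zfst P, q = opair a b) ∧
  (∀ a ∈ zfst P, opair a a ∈ zsnd P) ∧
  (∀ a b c : ZFSet, opair a b ∈ zsnd P → opair b c ∈ zsnd P → opair a c ∈ zsnd P) ∧
  (∀ a b : ZFSet, opair a b ∈ zsnd P → opair b a ∈ zsnd P → a = b)

/-- `a ≤ b` in the coded forcing `P` (`a` extends, i.e. is stronger than, `b`). -/
def ple (P a b : ZFSet) : Prop := opair a b ∈ zsnd P

/-- `g` is a filter on the coded forcing `P`. -/
def IsFilterOn (P g : ZFSet) : Prop :=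
  g ⊆ zfst P ∧
  (∀ p ∈ g, ∀ q ∈ zfst P, ple P p q → q ∈ g) ∧
  (∀ p ∈ g, ∀ q ∈ g, ∃ r ∈ g, ple P r p ∧ ple P r q)

/-- `D` is a dense subset of the coded forcing `P`. -/
def IsDenseIn (P D : ZFSet) : Prop :=
  D ⊆ zfst P ∧ ∀ p ∈ zfst P, ∃ q ∈ D, ple P q p

/-- `g` is a `P`-generic filter over `V`: a filter on `P` meeting all dense
subsets of `P` lying in `V`. -/
def GenericFilterOver (V P g : ZFSet) : Prop :=
  IsFilterOn P g ∧ ∀ D ∈ V, IsDenseIn P D → ∃ q ∈ g, q ∈ D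

/-- `p` is an atom of the coded forcing `P`: any two extensions of `p`
are compatible. -/
def PAtom (P p : ZFSet) : Prop :=
  p ∈ zfst P ∧ ∀ q₁ ∈ zfst P, ∀ q₂ ∈ zfst P, ple P q₁ p → ple P q₂ p →
    ∃ r ∈ zfst P, ple P r q₁ ∧ ple P r q₂

/-- An atomless forcing notion. -/
def Atomless (P : ZFSet) : Prop := ∀ p ∈ zfst P, ¬ PAtom P p

/-- `g_p(ℙ) = {q ∈ P : q` is compatible with `p}`. -/
def gpSet (P p : ZFSet) : ZFSet :=
  ZFSet.sep (fun q => ∃ r ∈ zfst P, ple P r q ∧ ple P r p) (zfst P)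

/-- The reverse-inclusion order on a set `p` of conditions, as a set of pairs. -/
def supsetOrder (p : ZFSet) : ZFSet :=
  ZFSet.sep (fun q => ∃ a ∈ p, ∃ b ∈ p, q = opair a b ∧ b ⊆ a) (ZFSet.prod p p)

/-! ### the forcings `ℙ(𝔗)` and their derivatives -/

/-- `P(𝔗)`: finite subsets of `𝓛_𝔗` included in `Σ(𝔗, M)` for some model
`M` of `𝔗` in some outer model of `V`. -/
def PT (V x : ZFSet) : ZFSet :=
  ZFSet.sep
    (fun p => ∃ W M, OuterModel V W ∧ M ∈ W ∧ ModelsTCI M x ∧ p ⊆ SigmaSet x M)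
    (finSubsets (LL x))

/-- The forcing notion `ℙ(𝔗) = (P(𝔗), ⊇)`. -/
def Pforcing (V x : ZFSet) : ZFSet := opair (PT V x) (supsetOrder (PT V x))

/-- `q` is an atom of a `⊇`-ordered set `P` of conditions. -/
def SupAtomIn (P q : ZFSet) : Prop :=
  q ∈ P ∧ ∀ q₁ ∈ P, ∀ q₂ ∈ P, q ⊆ q₁ → q ⊆ q₂ → ∃ r ∈ P, q₁ ⊆ r ∧ q₂ ⊆ r

/-- The derivative forcings `P(𝔗)^{(α)}`: conditions certified by the diagram
of a model of `𝔗` avoiding all atoms of all earlier stages (stage `0` is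
`P(𝔗)` itself). -/
def PTa (V x : ZFSet) : Ordinal.{1} → ZFSet :=
  WellFounded.fix wellFounded_lt fun α rec =>
    ZFSet.sep
      (fun p => ∃ W M, OuterModel V W ∧ M ∈ W ∧ ModelsTCI M x ∧ p ⊆ SigmaSet x M ∧
        ∀ β, ∀ h : β < α, ∀ q, SupAtomIn (rec β h) q → ¬ q ⊆ SigmaSet x M)
      (finSubsets (LL x))

/-- The ordinal `|[𝓛_𝔗]^{<ω}|⁺`, bounding the derivative process. -/
def cardBound (x : ZFSet) : Ordinal.{1} :=
  (Order.succ (Cardinal.mk (finSubsets (LL x)).toSet)).ord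

/-- The fixed point `P(𝔗)^⊤` of the derivative process. -/
def PTtopSet (V x : ZFSet) : ZFSet :=
  PTa V x (sInf {α : Ordinal.{1} | PTa V x α = PTa V x (Order.succ α)})

/-- The forcing notion `ℙ(𝔗)^⊤`. -/
def PtopForcing (V x : ZFSet) : ZFSet :=
  opair (PTtopSet V x) (supsetOrder (PTtopSet V x))

/-- `M` is an almost finitely determined model of `𝔗`: `p ⊆ Σ(𝔗, M)` for
some atom `p` of some derivative forcing `ℙ(𝔗)^{(α)}`, `α < |[𝓛_𝔗]^{<ω}|⁺`. -/
def AlmostFinDet (V x M : ZFSet) : Prop :=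
  ModelsTCI M x ∧ ∃ α : Ordinal.{1}, α < cardBound x ∧
    ∃ p, SupAtomIn (PTa V x α) p ∧ p ⊆ SigmaSet x M

/-- All models of `𝔗` in outer models of `V` are almost finitely determined. -/
def AllAFD (V x : ZFSet) : Prop :=
  ∀ W M, OuterModel V W → M ∈ W → ModelsTCI M x → AlmostFinDet V x M

/-! ### the TCI `𝔗(ℙ)` of a forcing notion -/

/-- The symbol `≤̇` (binary relation). -/
def leSym : ZFSet := opair (natZ 0) (opair (natZ 2) (natZ 0))

/-- The symbol `Ġ` (unary relation) for the generic filter. -/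
def gSym : ZFSet := opair (natZ 0) (opair (natZ 1) (natZ 1))

/-- The symbol `Ḋ` (unary relation) associated to the dense set `D`. -/
def dSym (D : ZFSet) : ZFSet := opair (natZ 0) (opair (natZ 1) (opair (natZ 2) D))

/-- The distinguished symbol `U̇` used for `𝔗(ℙ)` and `𝔗_s`. -/
def udSym : ZFSet := opair (natZ 0) (opair (natZ 1) (natZ 3))

/-- The set of dense subsets of a coded forcing notion `P`. -/
def denseSets (P : ZFSet) : ZFSet :=
  ZFSet.sep (fun D => ∀ p ∈ zfst P, ∃ q ∈ D, ple P q p) (ZFSet.powerset (zfst P))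

/-- `Ġ(i)` as a formula. -/
def relG (i : ℕ) : Fm := Fm.rel gSym 1 (fun _ => Tm.var i)

/-- `i ≤̇ j` as a formula. -/
def relLe (i j : ℕ) : Fm := Fm.rel leSym 2 ![Tm.var i, Tm.var j]

/-- The sentences of `𝔗(ℙ)`: `Ġ` is a filter meeting each dense set. -/
def TofPTheory (P : ZFSet) : ZFSet :=
  insert (FmCode (Fm.all (Fm.all (Fm.ex (Fm.imp (Fm.and (relG 2) (relG 1))
      (Fm.and (relG 0) (Fm.and (relLe 0 2) (relLe 0 1))))))))
    (insert (FmCode (Fm.all (Fm.all (Fm.imp (Fm.and (relLe 1 0) (relG 1)) (relG 0)))))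
      (zimage (fun D => FmCode (Fm.ex (Fm.and (relG 0) (Fm.rel (dSym D) 1 (fun _ => Tm.var 0)))))
        (denseSets P)))

/-- The constraint map of `𝔗(ℙ)`. -/
def TofPTheta (P : ZFSet) : ZFSet :=
  insert (opair udSym (opair (zfst P) (natZ 1)))
    (insert (opair leSym (opair (zsnd P) (natZ 1)))
      (insert (opair gSym (opair (zfst P) (natZ 0)))
        (zimage (fun D => opair (dSym D) (opair D (natZ 1))) (denseSets P))))

/-- The `Π₂` TCI `𝔗(ℙ)` whose models (in outer models of `V`) are exactly
the `ℙ`-generic filters over `V`. -/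
def TofP (P : ZFSet) : ZFSet :=
  opair (TofPTheory P)
    (opair (insert leSym (insert gSym (zimage dSym (denseSets P))))
      (opair udSym (TofPTheta P)))

/-! ### evaluations, local method definitions and `≤^M` -/

/-- `Eval^V(𝔗) = {V[M] : M ⊨* 𝔗` in some outer model of `V}`. -/
def EvalT (V x : ZFSet) : Set ZFSet :=
  {W' | ∃ W M, OuterModel V W ∧ M ∈ W ∧ ModelsTCI M x ∧ Generates V M W'}

/-- A valuation loading one set at variable `0`. -/
def vone (a : ZFSet) : ℕ → ZFSet := fun n => if n = 0 then a else ∅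

/-- A valuation loading two sets at variables `0`, `1`. -/
def vtwo (a b : ZFSet) : ℕ → ZFSet := fun n => if n = 0 then a else if n = 1 then b else ∅

/-- A valuation loading three sets at variables `0`, `1`, `2`. -/
def vthree (a b c : ZFSet) : ℕ → ZFSet :=
  fun n => if n = 0 then a else if n = 1 then b else if n = 2 then c else ∅

/-- The class function `F` (restricted to the class `X`) is definable in `V`
with parameters in `V`. -/
def DefFunIn (V : ZFSet) (X : ZFSet → Prop) (F : ZFSet → ZFSet) : Prop :=
  ∃ φ : Fm, Fm.memOnly φ ∧ (∀ a ∈ Fm.paramSet φ, a ∈ V) ∧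
    ∀ x, x ∈ V → X x → ∀ y, y ∈ V → (SatV V φ (vtwo x y) ↔ y = F x)

/-- A local method definition over `V`: a nonempty class of TCIs in `V`,
definable in `V` with parameters in `V`. -/
def LocalMethodDef (V : ZFSet) (X : ZFSet → Prop) : Prop :=
  (∃ t, X t) ∧ (∀ t, X t → t ∈ V ∧ IsTCI t) ∧
  ∃ φ : Fm, Fm.memOnly φ ∧ (∀ a ∈ Fm.paramSet φ, a ∈ V) ∧
    ∀ t, t ∈ V → (X t ↔ SatV V φ (vone t))

/-- The reducibility relation `X ≤^M Y` between local method definitions: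
some `V`-definable `F : X → Y` satisfies
`∅ ≠ Eval^V(F(𝔗)) ⊆ Eval^V(𝔗)` for all consistent `𝔗 ∈ X`. -/
def LeqM (V : ZFSet) (X Y : ZFSet → Prop) : Prop :=
  ∃ F : ZFSet → ZFSet, DefFunIn V X F ∧
    (∀ x, x ∈ V → X x → F x ∈ V ∧ Y (F x)) ∧
    ∀ x, x ∈ V → X x → ConsistentTCI V x →
      (EvalT V (F x)).Nonempty ∧ EvalT V (F x) ⊆ EvalT V x

/-- `X ≡^M Y`. -/
def EquivM (V : ZFSet) (X Y : ZFSet → Prop) : Prop := LeqM V X Y ∧ LeqM V Y X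

/-- The local method definition `Π^M_n` of all `Π_n` TCIs. -/
def PiM (n : ℕ) : ZFSet → Prop := IsPiTCI n

/-- The local method definition `Σ^M_n` of all `Σ_n` TCIs. -/
def SigmaM (n : ℕ) : ZFSet → Prop := IsSigmaTCI n

/-- The local method definition `Fg = {𝔗(ℙ) : ℙ` a forcing notion in `V}`. -/
def FgClass (V : ZFSet) : ZFSet → Prop :=
  fun t => ∃ P, P ∈ V ∧ IsForcing P ∧ t = TofP P

/-! ### H(κ), collapse forcing, and structure-genericity -/

/-- `H` is (the code of) `H(|trcl(t)|⁺)` as computed inside `V`: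
the set of all `y ∈ V` whose transitive closure admits, in `V`,
an injection into the transitive closure of `t`. -/
def IsHIn (V t H : ZFSet) : Prop :=
  H ∈ V ∧ ∀ y, (y ∈ H ↔ (y ∈ V ∧
    ∀ ty tt, IsTrclOf {y} ty → IsTrclOf t tt → ∃ j ∈ V, ZInjFun j ty tt))

/-- The conditions of the collapse `Col(ω, λ)`: finite partial functions
from `ω` to `λ`. -/
def ColSet (lam : ZFSet) : ZFSet :=
  ZFSet.sep
    (fun f => (∀ q ∈ f, ∃ a b, q = opair a b) ∧
      (∀ a b b' : ZFSet, opair a b ∈ f → opair a b' ∈ f → b = b') ∧ f.toSet.Finite)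
    (ZFSet.powerset (ZFSet.prod ZFSet.omega lam))

/-- The collapse forcing `Col(ω, λ)`, ordered by reverse inclusion. -/
def ColForcing (lam : ZFSet) : ZFSet := opair (ColSet lam) (supsetOrder (ColSet lam))

/-- `g` is a `P`-generic filter over the ∈-structure with domain `H`:
a filter on `P` meeting every dense subset of `P` definable over `(H; ∈)`
with parameters in `H`. -/
def GenericOverStruct (H P g : ZFSet) : Prop :=
  IsFilterOn P g ∧
  ∀ φ : Fm, Fm.memOnly φ → (∀ a ∈ Fm.paramSet φ, a ∈ H) →
    ((∀ p ∈ zfst P, ∃ q ∈ zfst P, SatV H φ (vone q) ∧ ple P q p) →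
      ∃ q ∈ g, SatV H φ (vone q))

/-- The `Π₀` TCI `𝔗_s` whose models in any outer model are the subsets of `s`. -/
def Tsub (s : ZFSet) : ZFSet :=
  opair ∅ (opair ∅ (opair udSym ({opair udSym (opair s (natZ 0))} : ZFSet)))

end SmallExt

namespace SmallExt

/-- `g_p` for a `⊇`-ordered set of conditions `P`:
the conditions compatible with `p`. -/
def gpSup (P p : ZFSet) : ZFSet :=
  ZFSet.sep (fun q => ∃ r ∈ P, q ⊆ r ∧ p ⊆ r) P

/-- Outer models among arbitrary (not necessarily countable) transitive
models of ZFC. -/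
def OuterModelT (U W : ZFSet) : Prop :=
  IsTransModel U ∧ IsTransModel W ∧ U ⊆ W ∧ ∀ y ∈ W, IsOrd y → y ∈ U

/-- Consistency of a TCI relative to a transitive model `U` of ZFC. -/
def ConsistentT (U x : ZFSet) : Prop :=
  ∃ W M, OuterModelT U W ∧ M ∈ W ∧ ModelsTCI M x

end SmallExt

namespace SmallExt
open Classical

/-! ### Renaming of variables -/

/-- Rename the variables of a term. -/
def Tm.ren (ρ : ℕ → ℕ) : Tm → Tm
  | Tm.var n => Tm.var (ρ n)
  | Tm.param a => Tm.param a
  | Tm.func s n a => Tm.func s n (fun i => Tm.ren ρ (a i))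

/-- Lift a renaming under a binder. -/
def liftR (ρ : ℕ → ℕ) : ℕ → ℕ
  | 0 => 0
  | n + 1 => ρ n + 1

/-- Rename the free variables of a formula. -/
def Fm.ren : (ℕ → ℕ) → Fm → Fm
  | ρ, Fm.rel s n a => Fm.rel s n (fun i => Tm.ren ρ (a i))
  | ρ, Fm.eq t u => Fm.eq (Tm.ren ρ t) (Tm.ren ρ u)
  | ρ, Fm.not f => Fm.not (Fm.ren ρ f)
  | ρ, Fm.imp f g => Fm.imp (Fm.ren ρ f) (Fm.ren ρ g)
  | ρ, Fm.all f => Fm.all (Fm.ren (liftR ρ) f)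
  | ρ, Fm.ex f => Fm.ex (Fm.ren (liftR ρ) f)

theorem Tm.eval_ren (fI : ZFSet → List ZFSet → ZFSet) (v : ℕ → ZFSet) (ρ : ℕ → ℕ) (t : Tm) :
    Tm.eval fI v (Tm.ren ρ t) = Tm.eval fI (fun n => v (ρ n)) t := by
  induction t with
  | var n => rfl
  | param a => rfl
  | func s n a ih => simp [Tm.ren, Tm.eval, ih]

theorem vcons_liftR (z : ZFSet) (v : ℕ → ZFSet) (ρ : ℕ → ℕ) :
    (fun n => vcons z v (liftR ρ n)) = vcons z (fun n => v (ρ n)) := by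
  funext n; cases n <;> rfl

theorem sat_ren (M : ZFSet) (f : Fm) : ∀ (ρ : ℕ → ℕ) (v : ℕ → ZFSet),
    SatV M (Fm.ren ρ f) v ↔ SatV M f (fun n => v (ρ n)) := by
  unfold SatV
  induction f with
  | rel s n a => intro ρ v; simp [Fm.ren, Sat, Tm.eval_ren]
  | eq t u => intro ρ v; simp [Fm.ren, Sat, Tm.eval_ren]
  | not f ih => intro ρ v; simp [Fm.ren, Sat, ih]
  | imp f g ih1 ih2 => intro ρ v; simp [Fm.ren, Sat, ih1, ih2]
  | all f ih => intro ρ v; simp [Fm.ren, Sat, ih, vcons_liftR]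
  | ex f ih => intro ρ v; simp [Fm.ren, Sat, ih, vcons_liftR]

theorem Tm.noFunc_ren (ρ : ℕ → ℕ) (t : Tm) (h : t.noFunc) : (Tm.ren ρ t).noFunc := by
  cases t <;> simp_all [Tm.ren, Tm.noFunc]

theorem memOnly_ren (f : Fm) : ∀ ρ, f.memOnly → (Fm.ren ρ f).memOnly := by
  induction f with
  | rel s n a =>
    intro ρ h
    exact ⟨h.1, h.2.1, fun i => Tm.noFunc_ren _ _ (h.2.2 i)⟩
  | eq t u => intro ρ h; exact ⟨Tm.noFunc_ren _ _ h.1, Tm.noFunc_ren _ _ h.2⟩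
  | not f ih => intro ρ h; exact ih _ h
  | imp f g ih1 ih2 => intro ρ h; exact ⟨ih1 _ h.1, ih2 _ h.2⟩
  | all f ih => intro ρ h; exact ih _ h
  | ex f ih => intro ρ h; exact ih _ h

theorem Tm.paramSet_ren (ρ : ℕ → ℕ) (t : Tm) : (Tm.ren ρ t).paramSet = t.paramSet := by
  induction t with
  | var n => rfl
  | param a => rfl
  | func s n a ih => simp [Tm.ren, Tm.paramSet, ih]

theorem paramSet_ren (f : Fm) : ∀ ρ, (Fm.ren ρ f).paramSet = f.paramSet := by
  induction f with
  | rel s n a => intro ρ; simp [Fm.ren, Fm.paramSet, Tm.paramSet_ren]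
  | eq t u => intro ρ; simp [Fm.ren, Fm.paramSet, Tm.paramSet_ren]
  | not f ih => intro ρ; exact ih _
  | imp f g ih1 ih2 => intro ρ; simp [Fm.ren, Fm.paramSet, ih1, ih2]
  | all f ih => intro ρ; exact ih _
  | ex f ih => intro ρ; exact ih _

theorem Tm.free_ren (ρ : ℕ → ℕ) (t : Tm) : ∀ m ∈ (Tm.ren ρ t).free, ∃ n ∈ t.free, ρ n = m := by
  induction t with
  | var n => intro m hm; exact ⟨n, rfl, hm.symm⟩
  | param a => intro m hm; exact hm.elim
  | func s n a ih =>
    rintro m ⟨i, hi⟩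
    obtain ⟨k, hk, e⟩ := ih i m hi
    exact ⟨k, ⟨i, hk⟩, e⟩

theorem free_ren (f : Fm) : ∀ ρ, ∀ m ∈ (Fm.ren ρ f).free, ∃ n ∈ f.free, ρ n = m := by
  have lift : ∀ (f : Fm), (∀ ρ, ∀ m ∈ (Fm.ren ρ f).free, ∃ n ∈ f.free, ρ n = m) →
      ∀ ρ, ∀ m, m + 1 ∈ (Fm.ren (liftR ρ) f).free → ∃ n, n + 1 ∈ f.free ∧ ρ n = m := by
    intro f ih ρ m hm
    obtain ⟨k, hk, e⟩ := ih _ _ hm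
    cases k with
    | zero => simp [liftR] at e
    | succ k => exact ⟨k, hk, by simpa [liftR] using e⟩
  induction f with
  | rel s n a =>
    rintro ρ m ⟨i, hi⟩
    obtain ⟨k, hk, e⟩ := Tm.free_ren _ _ m hi
    exact ⟨k, ⟨i, hk⟩, e⟩
  | eq t u =>
    rintro ρ m (h | h)
    · obtain ⟨k, hk, e⟩ := Tm.free_ren _ _ m h
      exact ⟨k, Or.inl hk, e⟩
    · obtain ⟨k, hk, e⟩ := Tm.free_ren _ _ m h
      exact ⟨k, Or.inr hk, e⟩
  | not f ih => exact ih
  | imp f g ih1 ih2 =>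
    rintro ρ m (h | h)
    · obtain ⟨k, hk, e⟩ := ih1 _ m h
      exact ⟨k, Or.inl hk, e⟩
    · obtain ⟨k, hk, e⟩ := ih2 _ m h
      exact ⟨k, Or.inr hk, e⟩
  | all f ih => exact lift f ih
  | ex f ih => exact lift f ih

/-! ### Finiteness of the set of free variables -/

theorem Tm.free_bdd (t : Tm) : ∃ N, ∀ m ∈ t.free, m < N := by
  induction t with
  | var n => exact ⟨n + 1, fun m hm => by cases hm; omega⟩
  | param a => exact ⟨0, fun m hm => hm.elim⟩
  | func s n a ih =>
    choose N hN using ih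
    refine ⟨∑ i, N i, ?_⟩
    rintro m ⟨i, hi⟩
    exact lt_of_lt_of_le (hN i m hi) (Finset.single_le_sum (fun _ _ => Nat.zero_le _)
      (Finset.mem_univ i))

theorem free_bdd (f : Fm) : ∃ N, ∀ m ∈ f.free, m < N := by
  induction f with
  | rel s n a =>
    choose N hN using fun i => Tm.free_bdd (a i)
    refine ⟨∑ i, N i, ?_⟩
    rintro m ⟨i, hi⟩
    exact lt_of_lt_of_le (hN i m hi) (Finset.single_le_sum (fun _ _ => Nat.zero_le _)
      (Finset.mem_univ i))
  | eq t u =>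
    obtain ⟨N, hN⟩ := Tm.free_bdd t
    obtain ⟨K, hK⟩ := Tm.free_bdd u
    refine ⟨N + K, ?_⟩
    rintro m (h | h)
    · have := hN m h; omega
    · have := hK m h; omega
  | not f ih => exact ih
  | imp f g ih1 ih2 =>
    obtain ⟨N, hN⟩ := ih1
    obtain ⟨K, hK⟩ := ih2
    refine ⟨N + K, ?_⟩
    rintro m (h | h)
    · have := hN m h; omega
    · have := hK m h; omega
  | all f ih =>
    obtain ⟨N, hN⟩ := ih
    exact ⟨N, fun m hm => by have := hN _ hm; omega⟩
  | ex f ih =>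
    obtain ⟨N, hN⟩ := ih
    exact ⟨N, fun m hm => by have := hN _ hm; omega⟩

theorem Tm.eval_agree (fI : ZFSet → List ZFSet → ZFSet) (v w : ℕ → ZFSet) (t : Tm)
    (h : ∀ m ∈ t.free, v m = w m) : Tm.eval fI v t = Tm.eval fI w t := by
  induction t with
  | var n => exact h n rfl
  | param a => rfl
  | func s n a ih =>
    have : ∀ i, Tm.eval fI v (a i) = Tm.eval fI w (a i) :=
      fun i => ih i fun m hm => h m ⟨i, hm⟩
    simp [Tm.eval, this]

theorem sat_agree (M : ZFSet) (f : Fm) : ∀ (v w : ℕ → ZFSet), (∀ m ∈ f.free, v m = w m) →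
    (SatV M f v ↔ SatV M f w) := by
  have lift : ∀ (f : Fm) (v w : ℕ → ZFSet), (∀ m, m + 1 ∈ f.free → v m = w m) →
      ∀ z, ∀ m ∈ f.free, vcons z v m = vcons z w m := by
    intro f v w h z m hm
    cases m with
    | zero => rfl
    | succ m => exact h m hm
  unfold SatV
  induction f with
  | rel s n a =>
    intro v w h
    have : ∀ i, Tm.eval (fun _ _ => ∅) v (a i) = Tm.eval (fun _ _ => ∅) w (a i) :=
      fun i => Tm.eval_agree _ _ _ _ fun m hm => h m ⟨i, hm⟩
    simp [Sat, this]
  | eq t u =>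
    intro v w h
    simp only [Sat]
    rw [Tm.eval_agree _ v w t fun m hm => h m (Or.inl hm),
      Tm.eval_agree _ v w u fun m hm => h m (Or.inr hm)]
  | not f ih => intro v w h; exact not_congr (ih v w h)
  | imp f g ih1 ih2 =>
    intro v w h
    exact imp_congr (ih1 v w fun m hm => h m (Or.inl hm)) (ih2 v w fun m hm => h m (Or.inr hm))
  | all f ih =>
    intro v w h
    exact forall_congr' fun z => imp_congr Iff.rfl (ih _ _ (lift f v w h z))
  | ex f ih =>
    intro v w h
    exact exists_congr fun z => and_congr Iff.rfl (ih _ _ (lift f v w h z))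

theorem sat_allClose (M : ZFSet) : ∀ (k : ℕ) (f : Fm) (v w : ℕ → ZFSet), (∀ i, w i ∈ M) →
    SatV M (allClose k f) v → SatV M f (fun n => if n < k then w n else v (n - k)) := by
  intro k
  induction k with
  | zero => intro f v w _ h; simpa [allClose] using h
  | succ k ih =>
    intro f v w hw h
    have h1 := ih (Fm.all f) v (fun n => w (n + 1)) (fun i => hw _) h
    have h2 := h1 (w 0) (hw 0)
    have e : (fun n => if n < k + 1 then w n else v (n - (k + 1))) =
        vcons (w 0) (fun n => if n < k then w (n + 1) else v (n - k)) := by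
      funext n
      cases n with
      | zero => simp [vcons]
      | succ n => simp [vcons]
    rw [e]
    exact h2

/-- Instantiating a universally closed sentence at a valuation into `M`. -/
theorem sat_of_allClose {M : ZFSet} {f : Fm} (h : ∀ k, SatV M (allClose k f) (fun _ => ∅))
    {w : ℕ → ZFSet} (hw : ∀ i, w i ∈ M) : SatV M f w := by
  obtain ⟨N, hN⟩ := free_bdd f
  have := sat_allClose M N f (fun _ => ∅) w hw (h N)
  refine (sat_agree M f _ _ fun m hm => ?_).1 this
  simp [hN m hm]

/-! ### Definability -/

/-- `P` is a parameter-free first-order condition on valuations into `M`. -/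
def Df (M : ZFSet) (P : (ℕ → ZFSet) → Prop) : Prop :=
  ∃ φ : Fm, φ.memOnly ∧ φ.paramSet = ∅ ∧ ∀ v, (∀ i, v i ∈ M) → (SatV M φ v ↔ P v)

theorem sat_mem2 (M : ZFSet) (i j : ℕ) (v : ℕ → ZFSet) : SatV M (mem2 i j) v ↔ v i ∈ v j := by
  simp [SatV, mem2, Sat, memRel, Tm.eval]

theorem sat_eq2 (M : ZFSet) (i j : ℕ) (v : ℕ → ZFSet) : SatV M (eq2 i j) v ↔ v i = v j := by
  simp [SatV, eq2, Sat, Tm.eval]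

theorem sat_not (M : ZFSet) (f : Fm) (v : ℕ → ZFSet) :
    SatV M (Fm.not f) v ↔ ¬ SatV M f v := Iff.rfl

theorem sat_imp (M : ZFSet) (f g : Fm) (v : ℕ → ZFSet) :
    SatV M (Fm.imp f g) v ↔ (SatV M f v → SatV M g v) := Iff.rfl

theorem sat_and (M : ZFSet) (f g : Fm) (v : ℕ → ZFSet) :
    SatV M (Fm.and f g) v ↔ (SatV M f v ∧ SatV M g v) := by
  simp [Fm.and, sat_not, sat_imp]

theorem sat_or (M : ZFSet) (f g : Fm) (v : ℕ → ZFSet) :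
    SatV M (Fm.or f g) v ↔ (SatV M f v ∨ SatV M g v) := by
  simp only [Fm.or, sat_not, sat_imp]; tauto

theorem sat_iff (M : ZFSet) (f g : Fm) (v : ℕ → ZFSet) :
    SatV M (Fm.iff f g) v ↔ (SatV M f v ↔ SatV M g v) := by
  simp only [Fm.iff, sat_and, sat_imp]; tauto

theorem sat_all (M : ZFSet) (f : Fm) (v : ℕ → ZFSet) :
    SatV M (Fm.all f) v ↔ ∀ z ∈ M, SatV M f (vcons z v) := Iff.rfl

theorem sat_ex (M : ZFSet) (f : Fm) (v : ℕ → ZFSet) :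
    SatV M (Fm.ex f) v ↔ ∃ z ∈ M, SatV M f (vcons z v) := Iff.rfl

theorem vcons_mem {M z : ZFSet} {v : ℕ → ZFSet} (hz : z ∈ M) (hv : ∀ i, v i ∈ M) :
    ∀ i, vcons z v i ∈ M := by
  intro i; cases i
  · exact hz
  · exact hv _

theorem Df.mem {M : ZFSet} (i j : ℕ) : Df M (fun v => v i ∈ v j) := by
  refine ⟨mem2 i j, ?_, ?_, fun v _ => sat_mem2 M i j v⟩
  · refine ⟨rfl, rfl, fun k => ?_⟩
    fin_cases k <;> trivial
  · ext a
    simp only [mem2, Fm.paramSet, Set.mem_ofPred_eq, Set.mem_empty_iff_false, iff_false]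
    rintro ⟨k, hk⟩
    fin_cases k <;> exact hk

theorem Df.eq {M : ZFSet} (i j : ℕ) : Df M (fun v => v i = v j) :=
  ⟨eq2 i j, ⟨trivial, trivial⟩, by simp [eq2, Fm.paramSet, Tm.paramSet],
    fun v _ => sat_eq2 M i j v⟩

theorem Df.congr {M : ZFSet} {P Q : (ℕ → ZFSet) → Prop} (h : Df M P)
    (e : ∀ v, (∀ i, v i ∈ M) → (P v ↔ Q v)) : Df M Q := by
  obtain ⟨φ, h1, h2, h3⟩ := h
  exact ⟨φ, h1, h2, fun v hv => (h3 v hv).trans (e v hv)⟩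

theorem Df.not {M : ZFSet} {P : (ℕ → ZFSet) → Prop} (h : Df M P) : Df M (fun v => ¬ P v) := by
  obtain ⟨φ, h1, h2, h3⟩ := h
  exact ⟨Fm.not φ, h1, h2, fun v hv => not_congr (h3 v hv)⟩

theorem Df.imp {M : ZFSet} {P Q : (ℕ → ZFSet) → Prop} (hP : Df M P) (hQ : Df M Q) :
    Df M (fun v => P v → Q v) := by
  obtain ⟨φ, h1, h2, h3⟩ := hP
  obtain ⟨ψ, k1, k2, k3⟩ := hQ
  exact ⟨Fm.imp φ ψ, ⟨h1, k1⟩, by simp [Fm.paramSet, h2, k2],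
    fun v hv => imp_congr (h3 v hv) (k3 v hv)⟩

theorem Df.and {M : ZFSet} {P Q : (ℕ → ZFSet) → Prop} (hP : Df M P) (hQ : Df M Q) :
    Df M (fun v => P v ∧ Q v) :=
  (hP.imp hQ.not).not.congr fun v _ => by tauto

theorem Df.or {M : ZFSet} {P Q : (ℕ → ZFSet) → Prop} (hP : Df M P) (hQ : Df M Q) :
    Df M (fun v => P v ∨ Q v) :=
  (hP.not.imp hQ).congr fun v _ => by tauto

theorem Df.iff {M : ZFSet} {P Q : (ℕ → ZFSet) → Prop} (hP : Df M P) (hQ : Df M Q) :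
    Df M (fun v => P v ↔ Q v) :=
  ((hP.imp hQ).and (hQ.imp hP)).congr fun v _ => by tauto

theorem vcons_eta (z : ZFSet) (v : ℕ → ZFSet) : (fun n => vcons z v (n + 1)) = v := rfl

theorem Df.ex {M : ZFSet} {Q : ZFSet → (ℕ → ZFSet) → Prop}
    (h : Df M (fun w => Q (w 0) (fun n => w (n + 1)))) : Df M (fun v => ∃ z ∈ M, Q z v) := by
  obtain ⟨φ, h1, h2, h3⟩ := h
  exact ⟨Fm.ex φ, h1, h2, fun v hv => exists_congr fun z =>
    and_congr_right fun hz => h3 _ (vcons_mem hz hv)⟩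

theorem Df.all {M : ZFSet} {Q : ZFSet → (ℕ → ZFSet) → Prop}
    (h : Df M (fun w => Q (w 0) (fun n => w (n + 1)))) : Df M (fun v => ∀ z ∈ M, Q z v) := by
  obtain ⟨φ, h1, h2, h3⟩ := h
  exact ⟨Fm.all φ, h1, h2, fun v hv => forall_congr' fun z =>
    imp_congr_right fun hz => h3 _ (vcons_mem hz hv)⟩

theorem Df.bex {M : ZFSet} (hM : M.IsTransitive) (i : ℕ) {Q : ZFSet → (ℕ → ZFSet) → Prop}
    (h : Df M (fun w => Q (w 0) (fun n => w (n + 1)))) : Df M (fun v => ∃ z ∈ v i, Q z v) := by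
  refine (Df.ex (Q := fun z v => z ∈ v i ∧ Q z v) ((Df.mem 0 (i + 1)).and h)).congr ?_
  intro v hv
  exact ⟨fun ⟨z, _, h1, h2⟩ => ⟨z, h1, h2⟩, fun ⟨z, h1, h2⟩ => ⟨z, hM _ (hv i) h1, h1, h2⟩⟩

theorem Df.ball {M : ZFSet} (hM : M.IsTransitive) (i : ℕ) {Q : ZFSet → (ℕ → ZFSet) → Prop}
    (h : Df M (fun w => Q (w 0) (fun n => w (n + 1)))) : Df M (fun v => ∀ z ∈ v i, Q z v) := by
  refine (Df.all (Q := fun z v => z ∈ v i → Q z v) ((Df.mem 0 (i + 1)).imp h)).congr ?_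
  intro v hv
  exact ⟨fun h z h1 => h z (hM _ (hv i) h1) h1, fun h z _ h1 => h z h1⟩

theorem Df.ren {M : ZFSet} {P : (ℕ → ZFSet) → Prop} (h : Df M P) (ρ : ℕ → ℕ) :
    Df M (fun v => P (fun n => v (ρ n))) := by
  obtain ⟨φ, h1, h2, h3⟩ := h
  exact ⟨Fm.ren ρ φ, memOnly_ren _ _ h1, (paramSet_ren _ _).trans h2,
    fun v hv => (sat_ren M φ ρ v).trans (h3 _ fun i => hv _)⟩

/-! ### Separation and collection in a transitive model -/

theorem model_sep {M : ZFSet} (hM : IsTransModel M) {P : (ℕ → ZFSet) → Prop} (hP : Df M P)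
    {v : ℕ → ZFSet} (hv : ∀ i, v i ∈ M) {x : ZFSet} (hx : x ∈ M) :
    ZFSet.sep (fun z => P (vcons z v)) x ∈ M := by
  obtain ⟨φ, h1, h2, h3⟩ := hP
  set ρ : ℕ → ℕ := fun n => if n = 0 then 0 else n + 2 with hρ
  have hfree : 1 ∉ (Fm.ren ρ φ).free := by
    intro h
    obtain ⟨n, _, e⟩ := free_ren _ _ _ h
    simp only [hρ] at e
    split_ifs at e <;> omega
  have key : SatV M (sepBody (Fm.ren ρ φ)) v := by
    refine sat_of_allClose (fun k => hM.2 _ ?_) hv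
    exact Or.inl (Or.inr ⟨k, _, memOnly_ren _ _ h1, (paramSet_ren _ _).trans h2, hfree, rfl⟩)
  obtain ⟨s, hs, hs'⟩ := key x hx
  convert hs
  ext z
  have key2 : z ∈ M → (z ∈ s ↔ z ∈ x ∧ P (vcons z v)) := by
    intro hz
    have := hs' z hz
    change SatV M _ _ at this
    rw [sat_iff, sat_and, sat_mem2, sat_mem2, sat_ren,
      h3 _ (fun i => vcons_mem hz (vcons_mem hs (vcons_mem hx hv)) _)] at this
    refine this.trans ?_
    have e : (fun n => vcons z (vcons s (vcons x v)) (ρ n)) = vcons z v := by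
      funext n; cases n <;> simp [hρ, vcons]
    rw [e]
    rfl
  rw [ZFSet.mem_sep]
  exact ⟨fun h => (key2 (hM.1 _ hx h.1)).2 h, fun h => (key2 (hM.1 _ hs h)).1 h⟩

theorem model_coll {M : ZFSet} (hM : IsTransModel M) {P : (ℕ → ZFSet) → Prop} (hP : Df M P)
    {v : ℕ → ZFSet} (hv : ∀ i, v i ∈ M) {a : ZFSet} (ha : a ∈ M)
    (h : ∀ x ∈ a, ∃ y ∈ M, P (vcons y (vcons x v))) :
    ∃ b ∈ M, ∀ x ∈ a, ∃ y ∈ b, P (vcons y (vcons x v)) := by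
  obtain ⟨φ, h1, h2, h3⟩ := hP
  set ρ : ℕ → ℕ := fun n => if n = 0 then 0 else if n = 1 then 1 else n + 2 with hρ
  have hfree : 2 ∉ (Fm.ren ρ φ).free := by
    intro h
    obtain ⟨n, _, e⟩ := free_ren _ _ _ h
    simp only [hρ] at e
    split_ifs at e <;> omega
  have key : SatV M (repBody (Fm.ren ρ φ)) v := by
    refine sat_of_allClose (fun k => hM.2 _ ?_) hv
    exact Or.inr ⟨k, _, memOnly_ren _ _ h1, (paramSet_ren _ _).trans h2, hfree, rfl⟩
  obtain ⟨b, hb, hb'⟩ := key a ha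
  have e : ∀ x y, (fun n => vcons y (vcons x (vcons b (vcons a v))) (ρ n)) =
      vcons y (vcons x v) := by
    intro x y
    funext n
    rcases n with _ | _ | n <;> simp [hρ, vcons]
  have conv : ∀ x ∈ M, ∀ y ∈ M, SatV M (Fm.ren ρ φ) (vcons y (vcons x (vcons b (vcons a v)))) ↔
      P (vcons y (vcons x v)) := by
    intro x hx y hy
    rw [sat_ren, e, h3 _ (vcons_mem hy (vcons_mem hx hv))]
  refine ⟨b, hb, fun x hx => ?_⟩
  have hxM := hM.1 _ ha hx
  have := hb' x hxM
  change SatV M (Fm.imp _ _) _ at this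
  rw [sat_imp, sat_mem2, sat_imp, sat_ex, sat_ex] at this
  obtain ⟨y, hy, hP⟩ := h x hx
  obtain ⟨y', hy', hh⟩ := this hx ⟨y, hy, (conv x hxM y hy).2 hP⟩
  rw [sat_and, sat_mem2] at hh
  exact ⟨y', hh.1, (conv x hxM y' hy').1 hh.2⟩

/-- The valuation given by a finite list. -/
def vl (l : List ZFSet) : ℕ → ZFSet := fun n => l.getD n ∅

end SmallExt

namespace SmallExt
open Classical

theorem Df.upair {M : ZFSet} (hM : M.IsTransitive) (i j k : ℕ) :
    Df M (fun v => v i = ({v j, v k} : ZFSet)) := by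
  refine (Df.all (Q := fun z v => z ∈ v i ↔ (z = v j ∨ z = v k))
    ((Df.mem 0 (i + 1)).iff ((Df.eq 0 (j + 1)).or (Df.eq 0 (k + 1))))).congr ?_
  intro v hv
  constructor
  · intro h
    ext z
    rw [ZFSet.mem_pair]
    constructor
    · intro hz; exact (h z (hM _ (hv i) hz)).1 hz
    · intro hz
      refine (h z ?_).2 hz
      rcases hz with rfl | rfl <;> exact hv _
  · intro h z _
    rw [h, ZFSet.mem_pair]

theorem Df.sub {M : ZFSet} (hM : M.IsTransitive) (i j : ℕ) : Df M (fun v => v i ⊆ v j) :=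
  Df.ball hM i (Q := fun z v => z ∈ v j) (Df.mem 0 (j + 1))

theorem Df.trans {M : ZFSet} (hM : M.IsTransitive) (i : ℕ) :
    Df M (fun v => (v i).IsTransitive) :=
  Df.ball hM i (Q := fun z v => z ⊆ v i) (Df.sub hM 0 (i + 1))

theorem Df.ord {M : ZFSet} (hM : M.IsTransitive) (i : ℕ) : Df M (fun v => IsOrd (v i)) :=
  (Df.trans hM i).and (Df.ball hM i (Q := fun z _ => z.IsTransitive) (Df.trans hM 0))

theorem IsOrd.isOrdinal {x : ZFSet} (h : IsOrd x) : x.IsOrdinal :=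
  ZFSet.isOrdinal_iff_forall_mem_isTransitive.2 h

theorem IsOrd.of {x : ZFSet} (h : x.IsOrdinal) : IsOrd x :=
  ZFSet.isOrdinal_iff_forall_mem_isTransitive.1 h

theorem IsOrd.mem {x y : ZFSet} (h : IsOrd x) (hy : y ∈ x) : IsOrd y :=
  IsOrd.of (h.isOrdinal.mem hy)

theorem model_empty {M : ZFSet} (hM : IsTransModel M) : ∅ ∈ M := by
  have h : SatV M infAx (fun _ => ∅) := hM.2 _ (by simp [ZFCax])
  obtain ⟨x, hx, -⟩ := h
  have := model_sep hM (P := fun w => ¬ w 0 = w 0) (Df.not (Df.eq 0 0)) (v := fun _ => x)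
    (fun _ => hx) hx
  convert this
  ext z
  simp

theorem vl_mem {M : ZFSet} (hM : IsTransModel M)
    {l : List ZFSet} (h : ∀ a ∈ l, a ∈ M) : ∀ i, vl l i ∈ M := by
  intro i
  unfold vl
  by_cases hi : i < l.length
  · rw [List.getD_eq_getElem _ _ hi]
    exact h _ (List.getElem_mem hi)
  · rw [List.getD_eq_default _ _ (by omega)]
    exact model_empty hM

theorem model_upair {M : ZFSet} (hM : IsTransModel M)
    {a b : ZFSet} (ha : a ∈ M) (hb : b ∈ M) : ({a, b} : ZFSet) ∈ M := by
  have h : SatV M pairAx (fun _ => ∅) := hM.2 _ (by simp [ZFCax])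
  obtain ⟨c, hc, hc'⟩ := h a ha b hb
  change SatV M _ _ at hc'
  rw [sat_and, sat_mem2, sat_mem2] at hc'
  have := model_sep hM (P := fun w => w 0 = w 1 ∨ w 0 = w 2) ((Df.eq 0 1).or (Df.eq 0 2))
    (v := vl [a, b]) (vl_mem hM (by simp [ha, hb])) hc
  convert this
  ext z
  rw [ZFSet.mem_pair, ZFSet.mem_sep]
  change _ ↔ z ∈ c ∧ (z = a ∨ z = b)
  refine ⟨fun hz => ⟨?_, hz⟩, fun hz => hz.2⟩
  rcases hz with rfl | rfl
  · exact hc'.1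
  · exact hc'.2

theorem model_sing {M : ZFSet} (hM : IsTransModel M)
    {a : ZFSet} (ha : a ∈ M) : ({a} : ZFSet) ∈ M := by
  rw [← ZFSet.pair_eq_singleton]; exact model_upair hM ha ha

theorem model_pair {M : ZFSet} (hM : IsTransModel M)
    {a b : ZFSet} (ha : a ∈ M) (hb : b ∈ M) : ZFSet.pair a b ∈ M :=
  model_upair hM (model_sing hM ha) (model_upair hM ha hb)

theorem model_sUnion {M : ZFSet} (hM : IsTransModel M)
    {a : ZFSet} (ha : a ∈ M) : ZFSet.sUnion a ∈ M := by
  have h : SatV M unionAx (fun _ => ∅) := hM.2 _ (by simp [ZFCax])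
  obtain ⟨c, hc, hc'⟩ := h a ha
  have hsub : ∀ y ∈ a, ∀ z ∈ y, z ∈ c := by
    intro y hy z hz
    have hyM := hM.1 _ ha hy
    have := hc' z (hM.1 _ hyM hz) y hyM
    change SatV M (Fm.imp _ _) _ at this
    rw [sat_imp, sat_and, sat_mem2, sat_mem2, sat_mem2] at this
    exact this ⟨hz, hy⟩
  have := model_sep hM (P := fun w => ∃ y ∈ w 1, w 0 ∈ y) (Df.bex hM.1 1 (Df.mem 1 0))
    (v := vl [a]) (vl_mem hM (by simp [ha])) hc
  convert this
  ext z
  rw [ZFSet.mem_sUnion, ZFSet.mem_sep]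
  change _ ↔ z ∈ c ∧ ∃ y ∈ a, z ∈ y
  exact ⟨fun ⟨y, hy, hz⟩ => ⟨hsub y hy z hz, y, hy, hz⟩, fun h => h.2⟩

theorem model_union {M : ZFSet} (hM : IsTransModel M)
    {a b : ZFSet} (ha : a ∈ M) (hb : b ∈ M) : a ∪ b ∈ M := by
  rw [← ZFSet.sUnion_pair]; exact model_sUnion hM (model_upair hM ha hb)

theorem model_insert {M : ZFSet} (hM : IsTransModel M)
    {a b : ZFSet} (ha : a ∈ M) (hb : b ∈ M) : insert a b ∈ M := by
  have : insert a b = {a} ∪ b := by ext z; simp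
  rw [this]; exact model_union hM (model_sing hM ha) hb

theorem model_pow {M : ZFSet} (hM : IsTransModel M)
    {a : ZFSet} (ha : a ∈ M) : ∃ p ∈ M, ∀ z, z ∈ p ↔ z ∈ M ∧ z ⊆ a := by
  have h : SatV M powAx (fun _ => ∅) := hM.2 _ (by simp [ZFCax])
  obtain ⟨c, hc, hc'⟩ := h a ha
  have hsub : ∀ y ∈ M, y ⊆ a → y ∈ c := by
    intro y hy hya
    have := hc' y hy
    change SatV M (Fm.imp _ _) _ at this
    rw [sat_imp, sat_all, sat_mem2] at this
    refine this fun z hz => ?_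
    rw [sat_imp, sat_mem2, sat_mem2]
    exact fun hz' => hya hz'
  refine ⟨_, model_sep hM (P := fun w => w 0 ⊆ w 1) (Df.sub hM.1 0 1)
    (v := vl [a]) (vl_mem hM (by simp [ha])) hc, fun z => ?_⟩
  rw [ZFSet.mem_sep]
  change z ∈ c ∧ z ⊆ a ↔ _
  exact ⟨fun h => ⟨hM.1 _ hc h.1, h.2⟩, fun h => ⟨hsub z h.1 h.2, h.2⟩⟩

theorem Df.pairEq {M : ZFSet} (hM : IsTransModel M)
    (i j k : ℕ) : Df M (fun v => v i = ZFSet.pair (v j) (v k)) := by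
  refine (Df.ex (Q := fun s v => ∃ t ∈ M, s = ({v j, v j} : ZFSet) ∧ t = ({v j, v k} : ZFSet) ∧
    v i = ({s, t} : ZFSet)) (Df.ex ((Df.upair hM.1 1 (j + 2) (j + 2)).and
      ((Df.upair hM.1 0 (j + 2) (k + 2)).and (Df.upair hM.1 (i + 2) 1 0))))).congr ?_
  intro v hv
  constructor
  · rintro ⟨s, _, t, _, rfl, rfl, h⟩
    rw [h, ZFSet.pair_eq_singleton]; rfl
  · intro h
    refine ⟨_, model_upair hM (hv j) (hv j), _, model_upair hM (hv j) (hv k), rfl, rfl, ?_⟩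
    rw [h, ZFSet.pair_eq_singleton]; rfl

theorem Df.pairMem {M : ZFSet} (hM : IsTransModel M)
    (i j k : ℕ) : Df M (fun v => ZFSet.pair (v i) (v j) ∈ v k) := by
  refine (Df.bex hM.1 k (Q := fun p v => p = ZFSet.pair (v i) (v j))
    (Df.pairEq hM 0 (i + 1) (j + 1))).congr ?_
  intro v hv
  exact ⟨fun ⟨p, hp, e⟩ => e ▸ hp, fun h => ⟨_, h, rfl⟩⟩

theorem pair_left_mem {M : ZFSet} (hM : IsTransModel M)
    {a b c : ZFSet} (hc : c ∈ M) (h : ZFSet.pair a b ∈ c) : a ∈ M ∧ b ∈ M := by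
  have h1 := hM.1 _ hc h
  have h2 : ({a, b} : ZFSet) ∈ M := hM.1 _ h1 (by simp [ZFSet.pair])
  exact ⟨hM.1 _ h2 (by simp), hM.1 _ h2 (by simp)⟩

theorem model_prod {M : ZFSet} (hM : IsTransModel M)
    {a b : ZFSet} (ha : a ∈ M) (hb : b ∈ M) : ZFSet.prod a b ∈ M := by
  obtain ⟨p, hp, hp'⟩ := model_pow hM (model_union hM ha hb)
  obtain ⟨q, hq, hq'⟩ := model_pow hM hp
  have := model_sep hM (P := fun w => ∃ x ∈ w 1, ∃ y ∈ w 2, w 0 = ZFSet.pair x y)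
    (Df.bex hM.1 1 (Df.bex hM.1 3 (Df.pairEq hM 2 1 0)))
    (v := vl [a, b]) (vl_mem hM (by simp [ha, hb])) hq
  convert this
  ext z
  rw [ZFSet.mem_prod, ZFSet.mem_sep]
  change _ ↔ z ∈ q ∧ ∃ x ∈ a, ∃ y ∈ b, z = ZFSet.pair x y
  refine ⟨fun h => ⟨?_, h⟩, fun h => h.2⟩
  obtain ⟨x, hx, y, hy, rfl⟩ := h
  have hxM := hM.1 _ ha hx
  have hyM := hM.1 _ hb hy
  rw [hq']
  refine ⟨model_pair hM hxM hyM, fun w hw => ?_⟩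
  rw [hp']
  simp only [ZFSet.pair, ZFSet.mem_pair] at hw
  rcases hw with rfl | rfl
  · refine ⟨model_sing hM hxM, fun u hu => ?_⟩
    rw [ZFSet.mem_singleton] at hu
    subst hu
    exact ZFSet.mem_union.2 (Or.inl hx)
  · refine ⟨model_upair hM hxM hyM, fun u hu => ?_⟩
    rw [ZFSet.mem_pair] at hu
    rcases hu with rfl | rfl
    · exact ZFSet.mem_union.2 (Or.inl hx)
    · exact ZFSet.mem_union.2 (Or.inr hy)

/-- Every element of a transitive model belongs to a transitive element of it. -/
theorem model_trcl {M : ZFSet} (hM : IsTransModel M)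
    (x : ZFSet) (hx : x ∈ M) : ∃ t ∈ M, t.IsTransitive ∧ x ∈ t := by
  induction x using ZFSet.inductionOn with
  | h x ih =>
  obtain ⟨b, hb, hb'⟩ := model_coll hM (P := fun w => (w 0).IsTransitive ∧ w 1 ∈ w 0)
    ((Df.trans hM.1 0).and (Df.mem 1 0)) (v := vl []) (vl_mem hM (by simp)) hx
    (fun y hy => ih y hy (hM.1 _ hx hy))
  have hb2 := model_sep hM (P := fun w => (w 0).IsTransitive) (Df.trans hM.1 0)
    (v := vl []) (vl_mem hM (by simp)) hb
  set c := ZFSet.sep (fun z => z.IsTransitive) b with hc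
  change c ∈ M at hb2
  have hT : (ZFSet.sUnion c).IsTransitive :=
    ZFSet.IsTransitive.sUnion' fun y hy => (ZFSet.mem_sep.1 hy).2
  refine ⟨_, model_insert hM hx (model_sUnion hM hb2), ?_, ZFSet.mem_insert _ _⟩
  intro y hy z hz
  refine ZFSet.mem_insert_of_mem _ ?_
  rcases ZFSet.mem_insert_iff.1 hy with rfl | hy
  · obtain ⟨t, ht, htr, hzt⟩ := hb' z hz
    exact ZFSet.mem_sUnion_of_mem hzt (ZFSet.mem_sep.2 ⟨ht, htr⟩)
  · exact hT _ hy hz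

/-- A choice relation for the nonempty subsets of `x` lying in the model. -/
theorem model_choice {M : ZFSet} (hM : IsTransModel M)
    {x : ZFSet} (hx : x ∈ M) : ∃ C ∈ M, ∀ s ∈ M, s ⊆ x → (∃ y, y ∈ s) →
    ∃ y ∈ s, ZFSet.pair s y ∈ C ∧ ∀ y' ∈ s, ZFSet.pair s y' ∈ C → y' = y := by
  obtain ⟨p, hp, hp'⟩ := model_pow hM hx
  obtain ⟨q, hq, hq'⟩ := model_pow hM (model_prod hM hp hx)
  have hF := model_sep hM (P := fun w => ∃ s ∈ w 1, (∃ y ∈ s, y = y) ∧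
      ∀ r ∈ M, r ∈ w 0 ↔ ∃ y ∈ s, r = ZFSet.pair s y)
    (Df.bex hM.1 1 ((Df.bex hM.1 0 (Df.eq 0 0)).and
      (Df.all ((Df.mem 0 2).iff (Df.bex hM.1 1 (Df.pairEq hM 1 2 0))))))
    (v := vl [p]) (vl_mem hM (by simp [hp])) hq
  set F := ZFSet.sep (fun f => ∃ s ∈ p, (∃ y ∈ s, y = y) ∧
      ∀ r ∈ M, r ∈ f ↔ ∃ y ∈ s, r = ZFSet.pair s y) q with hFdef
  change F ∈ M at hF
  have h : SatV M choiceAx (fun _ => ∅) := hM.2 _ (by simp [ZFCax])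
  have h1 := h F hF
  change SatV M (Fm.imp _ _) _ at h1
  simp only [sat_imp, sat_and, sat_all, sat_ex, sat_mem2, sat_eq2, vcons] at h1
  obtain ⟨C, hC, hC'⟩ := h1 (by
    constructor
    · intro f hf hfF
      obtain ⟨hfq, s, hs, ⟨y, hy, -⟩, hr⟩ := ZFSet.mem_sep.1 hfF
      have hsM := ((hp' _).1 hs).1
      have hM' := model_pair hM hsM (hM.1 _ hsM hy)
      exact ⟨_, hM', (hr _ hM').2 ⟨y, hy, rfl⟩⟩
    · intro f hf f' hf' ⟨hfF, hfF', r, hrM, hr1, hr2⟩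
      obtain ⟨hfq, s, hs, -, hr⟩ := ZFSet.mem_sep.1 hfF
      obtain ⟨hfq', s', hs', -, hr'⟩ := ZFSet.mem_sep.1 hfF'
      obtain ⟨y, hy, e⟩ := (hr r hrM).1 hr1
      obtain ⟨y', hy', e'⟩ := (hr' r hrM).1 hr2
      have : s = s' := (ZFSet.pair_inj.1 (e.symm.trans e')).1
      subst this
      ext u
      constructor
      · intro hu
        have huM := hM.1 _ hf hu
        exact (hr' u huM).2 ((hr u huM).1 hu)
      · intro hu
        have huM := hM.1 _ hf' hu
        exact (hr u huM).2 ((hr' u huM).1 hu))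
  refine ⟨C, hC, fun s hs hsx ⟨y0, hy0⟩ => ?_⟩
  have hsp : s ∈ p := (hp' s).2 ⟨hs, hsx⟩
  have hfM : ZFSet.prod {s} s ∈ M := model_prod hM (model_sing hM hs) hs
  have hmem : ∀ r, r ∈ ZFSet.prod {s} s ↔ ∃ y ∈ s, r = ZFSet.pair s y := by
    intro r
    simp [ZFSet.mem_prod]
  have hfF : ZFSet.prod {s} s ∈ F := by
    refine ZFSet.mem_sep.2 ⟨?_, s, hsp, ⟨y0, hy0, rfl⟩, fun r _ => hmem r⟩
    rw [hq']
    refine ⟨hfM, fun r hr => ?_⟩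
    obtain ⟨y, hy, rfl⟩ := (hmem r).1 hr
    exact ZFSet.pair_mem_prod.2 ⟨hsp, hsx hy⟩
  obtain ⟨r, hrM, hrf, hrC, hru⟩ := hC' _ hfM hfF
  obtain ⟨y, hy, rfl⟩ := (hmem r).1 hrf
  refine ⟨y, hy, hrC, fun y' hy' hyC => ?_⟩
  have := hru _ (model_pair hM hs (hM.1 _ hs hy')) ⟨(hmem _).2 ⟨y', hy', rfl⟩, hyC⟩
  exact (ZFSet.pair_inj.1 this).2

end SmallExt

namespace SmallExt
open Classical

/-- `y` is the element chosen by `C` from the complement in `x` of the image of `β` under `g`. -/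
def Nxt (M C x β g y : ZFSet) : Prop :=
  ∃ s ∈ M, (∀ z ∈ M, z ∈ s ↔ z ∈ x ∧ ¬ ∃ γ ∈ β, ZFSet.pair γ z ∈ g) ∧ y ∈ s ∧ ZFSet.pair s y ∈ C

/-- `g` is a choice-guided enumeration of part of `x` along the ordinal `α`. -/
def Good (M C x α g : ZFSet) : Prop :=
  IsOrd α ∧ (∀ p ∈ g, ∃ β ∈ α, ∃ y ∈ x, p = ZFSet.pair β y) ∧
    (∀ β ∈ α, ∃ y ∈ x, ZFSet.pair β y ∈ g) ∧
    ∀ β ∈ α, ∀ y ∈ x, ZFSet.pair β y ∈ g → Nxt M C x β g y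

/-- `C` chooses exactly one element from each nonempty subset of `x` in `M`. -/
def Chs (M C x : ZFSet) : Prop := ∀ s ∈ M, s ⊆ x → (∃ y, y ∈ s) →
    ∃ y ∈ s, ZFSet.pair s y ∈ C ∧ ∀ y' ∈ s, ZFSet.pair s y' ∈ C → y' = y

/-- Some good enumeration in `M` sends `β` to `y`. -/
def Hr (M C x β y : ZFSet) : Prop :=
  ∃ α ∈ M, ∃ g ∈ M, Good M C x α g ∧ ZFSet.pair β y ∈ g

theorem Df.nxt {M : ZFSet} (hM : IsTransModel M) (i j k l m : ℕ) :
    Df M (fun v => Nxt M (v i) (v j) (v k) (v l) (v m)) :=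
  Df.ex (Df.and (Df.all (Df.iff (Df.mem 0 1) (Df.and (Df.mem 0 (j + 2)) (Df.not
    (Df.bex hM.1 (k + 2) (Df.pairMem hM 0 1 (l + 3)))))))
    (Df.and (Df.mem (m + 1) 0) (Df.pairMem hM 0 (m + 1) (i + 1))))

theorem Df.good {M : ZFSet} (hM : IsTransModel M) (i j k l : ℕ) :
    Df M (fun v => Good M (v i) (v j) (v k) (v l)) :=
  Df.and (Df.ord hM.1 k) (Df.and
    (Df.ball hM.1 l (Df.bex hM.1 (k + 1) (Df.bex hM.1 (j + 2) (Df.pairEq hM 2 1 0))))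
    (Df.and (Df.ball hM.1 k (Df.bex hM.1 (j + 1) (Df.pairMem hM 1 0 (l + 2))))
      (Df.ball hM.1 k (Df.ball hM.1 (j + 1) (Df.imp (Df.pairMem hM 1 0 (l + 2))
        (Df.nxt hM (i + 2) (j + 2) 1 (l + 2) 0))))))

theorem Df.hr {M : ZFSet} (hM : IsTransModel M) (i j k l : ℕ) :
    Df M (fun v => Hr M (v i) (v j) (v k) (v l)) :=
  Df.ex (Df.ex (Df.and (Df.good hM (i + 2) (j + 2) 1 0) (Df.pairMem hM (k + 2) (l + 2) 0)))

theorem Good.mem {M C x α g β y : ZFSet} (h : Good M C x α g) (hp : ZFSet.pair β y ∈ g) :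
    β ∈ α ∧ y ∈ x := by
  obtain ⟨β', hβ, y', hy, e⟩ := h.2.1 _ hp
  obtain ⟨rfl, rfl⟩ := ZFSet.pair_inj.1 e
  exact ⟨hβ, hy⟩

theorem nxt_unique {M C x : ZFSet} (hM : IsTransModel M) (hC : Chs M C x) {β g g' y y' : ZFSet}
    (h : Nxt M C x β g y) (h' : Nxt M C x β g' y')
    (e : ∀ γ ∈ β, ∀ z, ZFSet.pair γ z ∈ g ↔ ZFSet.pair γ z ∈ g') : y = y' := by
  obtain ⟨s, hs, hs1, hys, hyC⟩ := h
  obtain ⟨s', hs', hs1', hys', hyC'⟩ := h'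
  have : s = s' := by
    ext z
    constructor
    · intro hz
      have hzM := hM.1 _ hs hz
      refine (hs1' z hzM).2 ⟨((hs1 z hzM).1 hz).1, ?_⟩
      rintro ⟨γ, hγ, hp⟩
      exact ((hs1 z hzM).1 hz).2 ⟨γ, hγ, (e γ hγ z).2 hp⟩
    · intro hz
      have hzM := hM.1 _ hs' hz
      refine (hs1 z hzM).2 ⟨((hs1' z hzM).1 hz).1, ?_⟩
      rintro ⟨γ, hγ, hp⟩
      exact ((hs1' z hzM).1 hz).2 ⟨γ, hγ, (e γ hγ z).1 hp⟩
  subst this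
  obtain ⟨y0, _, _, hu⟩ := hC s hs (fun z hz => ((hs1 z (hM.1 _ hs hz)).1 hz).1) ⟨y, hys⟩
  rw [hu y hys hyC, hu y' hys' hyC']

theorem good_unique {M C x : ZFSet} (hM : IsTransModel M) (hC : Chs M C x) {α g α' g' : ZFSet}
    (h : Good M C x α g) (h' : Good M C x α' g') (β : ZFSet) :
    ∀ y y', ZFSet.pair β y ∈ g → ZFSet.pair β y' ∈ g' → y = y' := by
  induction β using ZFSet.inductionOn with
  | h β ih =>
  intro y y' hy hy'
  have m1 := h.mem hy
  have m2 := h'.mem hy'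
  refine nxt_unique hM hC (h.2.2.2 β m1.1 y m1.2 hy) (h'.2.2.2 β m2.1 y' m2.2 hy') ?_
  intro γ hγ z
  constructor
  · intro hz
    obtain ⟨z', _, hz'⟩ := h'.2.2.1 γ (h'.1.1 _ m2.1 hγ)
    rwa [ih γ hγ z z' hz hz']
  · intro hz
    obtain ⟨z', _, hz'⟩ := h.2.2.1 γ (h.1.1 _ m1.1 hγ)
    rwa [← ih γ hγ z' z hz' hz]

theorem good_agree {M C x : ZFSet} (hM : IsTransModel M) (hC : Chs M C x) {α g α' g' β y : ZFSet}
    (h : Good M C x α g) (h' : Good M C x α' g') (hy : ZFSet.pair β y ∈ g) (hβ : β ∈ α') :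
    ZFSet.pair β y ∈ g' := by
  obtain ⟨y', _, hy'⟩ := h'.2.2.1 β hβ
  rwa [good_unique hM hC h h' β y y' hy hy']

theorem hr_fun {M C x : ZFSet} (hM : IsTransModel M) (hC : Chs M C x) {β y y' : ZFSet}
    (h : Hr M C x β y) (h' : Hr M C x β y') : y = y' := by
  obtain ⟨α, _, g, _, hg, hp⟩ := h
  obtain ⟨α', _, g', _, hg', hp'⟩ := h'
  exact good_unique hM hC hg hg' β y y' hp hp'

theorem hr_notmem {M C x : ZFSet} (hM : IsTransModel M) (hC : Chs M C x) {β β' y : ZFSet}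
    (h : Hr M C x β y) (h' : Hr M C x β' y) : β ∉ β' := by
  intro hb
  obtain ⟨α, _, g, _, hg, hp⟩ := h
  obtain ⟨α', _, g', hgM', hg', hp'⟩ := h'
  have m := hg'.mem hp'
  have hβ : β ∈ α' := hg'.1.1 _ m.1 hb
  obtain ⟨s, hs, hs1, hys, _⟩ := hg'.2.2.2 β' m.1 y m.2 hp'
  exact ((hs1 y (hM.1 _ hs hys)).1 hys).2 ⟨β, hb, good_agree hM hC hg hg' hp hβ⟩

theorem hr_ord {M C x β y : ZFSet} (h : Hr M C x β y) : IsOrd β ∧ y ∈ x := by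
  obtain ⟨α, _, g, _, hg, hp⟩ := h
  have m := hg.mem hp
  exact ⟨hg.1.mem m.1, m.2⟩

theorem hr_inj {M C x : ZFSet} (hM : IsTransModel M) (hC : Chs M C x) {β β' y : ZFSet}
    (h : Hr M C x β y) (h' : Hr M C x β' y) : β = β' := by
  rcases (hr_ord h).1.isOrdinal.mem_trichotomous (hr_ord h').1.isOrdinal with h1 | h1 | h1
  · exact (hr_notmem hM hC h h' h1).elim
  · exact h1
  · exact (hr_notmem hM hC h' h h1).elim

/-- The enumeration along `α`. -/
def gOf (M C x α : ZFSet) : ZFSet :=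
  ZFSet.sep (fun p => ∃ β ∈ α, ∃ y ∈ x, p = ZFSet.pair β y ∧ Hr M C x β y) (ZFSet.prod α x)

theorem mem_gOf {M C x α β y : ZFSet} :
    ZFSet.pair β y ∈ gOf M C x α ↔ β ∈ α ∧ Hr M C x β y := by
  unfold gOf
  rw [ZFSet.mem_sep, ZFSet.pair_mem_prod]
  constructor
  · rintro ⟨-, β', hβ, y', hy, e, h⟩
    obtain ⟨rfl, rfl⟩ := ZFSet.pair_inj.1 e
    exact ⟨hβ, h⟩
  · rintro ⟨hβ, h⟩
    have := (hr_ord h).2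
    exact ⟨⟨hβ, this⟩, β, hβ, y, this, rfl, h⟩

theorem gOf_mem {M C x α : ZFSet} (hM : IsTransModel M) (hC : C ∈ M) (hx : x ∈ M) (hα : α ∈ M) :
    gOf M C x α ∈ M :=
  model_sep hM (P := fun w => ∃ β ∈ w 3, ∃ y ∈ w 2, w 0 = ZFSet.pair β y ∧ Hr M (w 1) (w 2) β y)
    (Df.bex hM.1 3 (Df.bex hM.1 3 (Df.and (Df.pairEq hM 2 1 0) (Df.hr hM 3 4 1 0))))
    (v := vl [C, x, α]) (vl_mem hM (by simp [hC, hx, hα])) (model_prod hM hα hx)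

theorem nxt_congr {M C x β g g' y : ZFSet} (h : Nxt M C x β g y)
    (e : ∀ γ ∈ β, ∀ z, ZFSet.pair γ z ∈ g ↔ ZFSet.pair γ z ∈ g') : Nxt M C x β g' y := by
  obtain ⟨s, hs, hs1, h2⟩ := h
  refine ⟨s, hs, fun z hz => (hs1 z hz).trans ?_, h2⟩
  refine and_congr_right fun _ => not_congr (exists_congr fun γ => and_congr_right fun hγ => e γ hγ z)

theorem gOf_good {M C x α : ZFSet} (hM : IsTransModel M) (hC : Chs M C x)
    (hα : IsOrd α) (h : ∀ β ∈ α, ∃ y, Hr M C x β y) : Good M C x α (gOf M C x α) := by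
  refine ⟨hα, fun p hp => ?_, fun β hβ => ?_, fun β hβ y hy hp => ?_⟩
  · obtain ⟨β, hβ, y, hy, e, _⟩ := (ZFSet.mem_sep.1 hp).2
    exact ⟨β, hβ, y, hy, e⟩
  · obtain ⟨y, hy⟩ := h β hβ
    exact ⟨y, (hr_ord hy).2, mem_gOf.2 ⟨hβ, hy⟩⟩
  · obtain ⟨-, α', hα', g, hgM, hg, hp'⟩ := mem_gOf.1 hp
    have m := hg.mem hp'
    refine nxt_congr (hg.2.2.2 β m.1 y hy hp') fun γ hγ z => ?_
    rw [mem_gOf]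
    constructor
    · intro hz
      exact ⟨hα.1 _ hβ hγ, α', hα', g, hgM, hg, hz⟩
    · rintro ⟨-, α2, hα2, g2, hg2M, hg2, hz⟩
      exact good_agree hM hC hg2 hg hz (hg.1.1 _ m.1 hγ)

theorem gOf_extend {M C x α : ZFSet} (hM : IsTransModel M) (hCM : C ∈ M) (hx : x ∈ M)
    (hC : Chs M C x) (hαM : α ∈ M)
    (hα : IsOrd α) (h : ∀ β ∈ α, ∃ y, Hr M C x β y)
    (hne : ∃ y ∈ x, ∀ β ∈ α, ¬ Hr M C x β y) : ∃ y, Hr M C x α y := by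
  have hg := gOf_good hM hC hα h
  have hgM := gOf_mem hM hCM hx hαM
  set g := gOf M C x α with hgdef
  have hs : ZFSet.sep (fun z => ¬ ∃ γ ∈ α, ZFSet.pair γ z ∈ g) x ∈ M :=
    model_sep hM (P := fun w => ¬ ∃ γ ∈ w 1, ZFSet.pair γ (w 0) ∈ w 2)
      (Df.not (Df.bex hM.1 1 (Df.pairMem hM 0 1 3)))
      (v := vl [α, g]) (vl_mem hM (by simp [hαM, hgM])) hx
  set s := ZFSet.sep (fun z => ¬ ∃ γ ∈ α, ZFSet.pair γ z ∈ g) x with hsdef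
  obtain ⟨y, hys, hyC, -⟩ := hC s hs ZFSet.sep_subset (by
    obtain ⟨y, hy, hy'⟩ := hne
    refine ⟨y, ZFSet.mem_sep.2 ⟨hy, ?_⟩⟩
    rintro ⟨γ, hγ, hp⟩
    exact hy' γ hγ (mem_gOf.1 hp).2)
  have hyx : y ∈ x := (ZFSet.mem_sep.1 hys).1
  have key : ∀ γ z, ZFSet.pair γ z ∈ insert (ZFSet.pair α y) g ↔
      (γ = α ∧ z = y) ∨ ZFSet.pair γ z ∈ g := by
    intro γ z
    rw [ZFSet.mem_insert_iff, ZFSet.pair_inj]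
  have old : ∀ β, β = α ∨ β ∈ α → ∀ γ ∈ β, ∀ z, ZFSet.pair γ z ∈ g ↔
      ZFSet.pair γ z ∈ insert (ZFSet.pair α y) g := by
    intro β hβ γ hγ z
    rw [key]
    refine ⟨Or.inr, ?_⟩
    rintro (⟨rfl, rfl⟩ | h)
    · rcases hβ with rfl | hβ
      · exact (ZFSet.mem_irrefl _ hγ).elim
      · exact (ZFSet.mem_asymm hγ hβ).elim
    · exact h
  refine ⟨y, insert α α, model_insert hM hαM hαM, insert (ZFSet.pair α y) g,
    model_insert hM (model_pair hM hαM (hM.1 _ hx hyx)) hgM, ⟨?_, ?_, ?_, ?_⟩,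
    ZFSet.mem_insert _ _⟩
  · exact IsOrd.of (ZFSet.isOrdinal_succ hα.isOrdinal)
  · intro p hp
    rcases ZFSet.mem_insert_iff.1 hp with rfl | hp
    · exact ⟨α, ZFSet.mem_insert _ _, y, hyx, rfl⟩
    · obtain ⟨β, hβ, z, hz, e⟩ := hg.2.1 p hp
      exact ⟨β, ZFSet.mem_insert_of_mem _ hβ, z, hz, e⟩
  · intro β hβ
    rcases ZFSet.mem_insert_iff.1 hβ with rfl | hβ
    · exact ⟨y, hyx, ZFSet.mem_insert _ _⟩
    · obtain ⟨z, hz, hp⟩ := hg.2.2.1 β hβ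
      exact ⟨z, hz, ZFSet.mem_insert_of_mem _ hp⟩
  · intro β hβ z hz hp
    rw [ZFSet.mem_insert_iff] at hβ
    rcases (key β z).1 hp with ⟨rfl, rfl⟩ | hp'
    · refine nxt_congr (g := g) ⟨s, hs, fun u _ => ZFSet.mem_sep, hys, hyC⟩ (old _ (Or.inl rfl))
    · have hβ' := (mem_gOf.1 hp').1
      exact nxt_congr (hg.2.2.2 β hβ' z hz hp') (old β (Or.inr hβ'))

theorem hartogs {M C x : ZFSet} (hM : IsTransModel M) (hCM : C ∈ M) (hx : x ∈ M)
    (hC : Chs M C x) (h : ∀ β ∈ M, IsOrd β → ∃ y, Hr M C x β y) : False := by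
  have hR := model_sep hM (P := fun w => ∃ β ∈ M, Hr M (w 1) (w 2) β (w 0))
    (Df.ex (Df.hr hM 2 3 0 1)) (v := vl [C, x]) (vl_mem hM (by simp [hCM, hx])) hx
  obtain ⟨B, hB, hB'⟩ := model_coll hM (P := fun w => Hr M (w 2) (w 3) (w 0) (w 1))
    (Df.hr hM 2 3 0 1) (v := vl [C, x]) (vl_mem hM (by simp [hCM, hx])) hR
    (fun y hy => (ZFSet.mem_sep.1 hy).2)
  have hO : ZFSet.sep (fun z => IsOrd z) B ∈ M := model_sep hM (P := fun w => IsOrd (w 0))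
    (Df.ord hM.1 0) (v := vl []) (vl_mem hM (by simp)) hB
  have hall : ∀ β ∈ M, IsOrd β → β ∈ ZFSet.sep (fun z => IsOrd z) B := by
    intro β hβ hβo
    obtain ⟨y, hy⟩ := h β hβ hβo
    obtain ⟨β', hβ', hy'⟩ := hB' y (ZFSet.mem_sep.2 ⟨(hr_ord hy).2, β, hβ, hy⟩)
    change Hr M C x β' y at hy'
    rw [hr_inj hM hC hy hy'] at hβo ⊢
    exact ZFSet.mem_sep.2 ⟨hβ', hβo⟩
  refine ZFSet.mem_irrefl _ (hall _ hO ⟨?_, ?_⟩)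
  · intro y hy z hz
    exact hall z (hM.1 _ (hM.1 _ hO hy) hz) ((ZFSet.mem_sep.1 hy).2.mem hz)
  · intro y hy
    exact (ZFSet.mem_sep.1 hy).2.1

/-- `g` is a bijection from `α` onto `x`. -/
structure Bij (α g x : ZFSet) : Prop where
  sub : ∀ p ∈ g, ∃ β ∈ α, ∃ y ∈ x, p = ZFSet.pair β y
  tot : ∀ β ∈ α, ∃ y ∈ x, ZFSet.pair β y ∈ g
  surj : ∀ y ∈ x, ∃ β ∈ α, ZFSet.pair β y ∈ g
  func : ∀ β y y', ZFSet.pair β y ∈ g → ZFSet.pair β y' ∈ g → y = y'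
  inj : ∀ β β' y, ZFSet.pair β y ∈ g → ZFSet.pair β' y ∈ g → β = β'

/-- The well-ordering theorem in a transitive model. -/
theorem model_wo {M x : ZFSet} (hM : IsTransModel M) (hx : x ∈ M) :
    ∃ α ∈ M, IsOrd α ∧ ∃ g ∈ M, Bij α g x := by
  obtain ⟨C, hCM, hC⟩ := model_choice hM hx
  have hC : Chs M C x := hC
  by_contra hcon
  refine hartogs hM hCM hx hC fun α => ?_
  induction α using ZFSet.inductionOn with
  | h α ih =>
  intro hαM hα
  have ih' : ∀ β ∈ α, ∃ y, Hr M C x β y := fun β hβ => ih β hβ (hM.1 _ hαM hβ) (hα.mem hβ)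
  refine gOf_extend hM hCM hx hC hαM hα ih' ?_
  by_contra hne
  push Not at hne
  have hg := gOf_good hM hC hα ih'
  refine hcon ⟨α, hαM, hα, gOf M C x α, gOf_mem hM hCM hx hαM, hg.2.1, hg.2.2.1, ?_, ?_, ?_⟩
  · intro y hy
    obtain ⟨β, hβ, h⟩ := hne y hy
    exact ⟨β, hβ, mem_gOf.2 ⟨hβ, h⟩⟩
  · intro β y y' h h'
    exact hr_fun hM hC (mem_gOf.1 h).2 (mem_gOf.1 h').2
  · intro β β' y h h'
    exact hr_inj hM hC (mem_gOf.1 h).2 (mem_gOf.1 h').2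

end SmallExt

namespace SmallExt
open Classical

/-- `h` is a partial decoding (collapse) of the relation `E` on `l`. -/
def Dec (M E l h : ZFSet) : Prop :=
  ∀ p ∈ h, ∃ α ∈ l, ∃ z ∈ M, p = ZFSet.pair α z ∧
    (∀ γ ∈ l, ZFSet.pair γ α ∈ E → ∃ u ∈ z, ZFSet.pair γ u ∈ h) ∧
    ∀ u ∈ z, ∃ γ ∈ l, ZFSet.pair γ α ∈ E ∧ ZFSet.pair γ u ∈ h

theorem Df.dec {M : ZFSet} (hM : IsTransModel M) (i j k : ℕ) :
    Df M (fun v => Dec M (v i) (v j) (v k)) := by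
  unfold Dec
  refine Df.ball hM.1 k (Q := fun p v => ∃ α ∈ v j, ∃ z ∈ M, p = ZFSet.pair α z ∧
    (∀ γ ∈ v j, ZFSet.pair γ α ∈ v i → ∃ u ∈ z, ZFSet.pair γ u ∈ v k) ∧
    ∀ u ∈ z, ∃ γ ∈ v j, ZFSet.pair γ α ∈ v i ∧ ZFSet.pair γ u ∈ v k) ?_
  refine Df.bex hM.1 (j + 1) (Q := fun α w => ∃ z ∈ M, w 0 = ZFSet.pair α z ∧
    (∀ γ ∈ w (j + 1), ZFSet.pair γ α ∈ w (i + 1) → ∃ u ∈ z, ZFSet.pair γ u ∈ w (k + 1)) ∧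
    ∀ u ∈ z, ∃ γ ∈ w (j + 1), ZFSet.pair γ α ∈ w (i + 1) ∧ ZFSet.pair γ u ∈ w (k + 1)) ?_
  refine Df.ex (Q := fun z w => w 1 = ZFSet.pair (w 0) z ∧
    (∀ γ ∈ w (j + 2), ZFSet.pair γ (w 0) ∈ w (i + 2) → ∃ u ∈ z, ZFSet.pair γ u ∈ w (k + 2)) ∧
    ∀ u ∈ z, ∃ γ ∈ w (j + 2), ZFSet.pair γ (w 0) ∈ w (i + 2) ∧ ZFSet.pair γ u ∈ w (k + 2)) ?_
  refine (Df.pairEq hM 2 1 0).and (Df.and ?_ ?_)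
  · refine Df.ball hM.1 (j + 3) (Q := fun γ w => ZFSet.pair γ (w 1) ∈ w (i + 3) →
      ∃ u ∈ w 0, ZFSet.pair γ u ∈ w (k + 3)) ?_
    refine (Df.pairMem hM 0 2 (i + 4)).imp ?_
    exact Df.bex hM.1 1 (Q := fun u w => ZFSet.pair (w 0) u ∈ w (k + 4))
      (Df.pairMem hM 1 0 (k + 5))
  · refine Df.ball hM.1 0 (Q := fun u w => ∃ γ ∈ w (j + 3), ZFSet.pair γ (w 1) ∈ w (i + 3) ∧
      ZFSet.pair γ u ∈ w (k + 3)) ?_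
    refine Df.bex hM.1 (j + 4) (Q := fun γ w => ZFSet.pair γ (w 2) ∈ w (i + 4) ∧
      ZFSet.pair γ (w 0) ∈ w (k + 4)) ?_
    exact (Df.pairMem hM 0 3 (i + 5)).and (Df.pairMem hM 0 1 (k + 5))

theorem dec_unique {M E l h g t : ZFSet} (ht : t.IsTransitive) (hg : Bij l g t)
    (hE : ∀ γ α x y, ZFSet.pair γ x ∈ g → ZFSet.pair α y ∈ g → (ZFSet.pair γ α ∈ E ↔ x ∈ y))
    (hh : Dec M E l h) (y : ZFSet) :
    ∀ α z, ZFSet.pair α y ∈ g → ZFSet.pair α z ∈ h → z = y := by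
  induction y using ZFSet.inductionOn with
  | h y ih =>
  intro α z hy hz
  obtain ⟨α', hα, z', -, e, h1, h2⟩ := hh _ hz
  obtain ⟨rfl, rfl⟩ := ZFSet.pair_injective e
  have hyt : y ∈ t := by
    obtain ⟨β, -, y', hy', e⟩ := hg.sub _ hy
    obtain ⟨-, rfl⟩ := ZFSet.pair_injective e
    exact hy'
  ext u
  constructor
  · intro hu
    obtain ⟨γ, hγ, hγE, hγu⟩ := h2 u hu
    obtain ⟨x, hx, hγx⟩ := hg.tot γ hγ
    have hxy := (hE _ _ _ _ hγx hy).1 hγE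
    rw [ih x hxy γ u hγx hγu]; exact hxy
  · intro hu
    obtain ⟨γ, hγ, hγu⟩ := hg.surj u (ht _ hyt hu)
    obtain ⟨u', hu', hγu'⟩ := h1 γ hγ ((hE _ _ _ _ hγu hy).2 hu)
    rw [← ih u hu γ u' hγu hγu']; exact hu'

theorem dec_exists {M E l g t : ZFSet} (hM : IsTransModel M) (hEM : E ∈ M) (hl : l ∈ M)
    (ht : t.IsTransitive) (hg : Bij l g t)
    (hE : ∀ γ α x y, ZFSet.pair γ x ∈ g → ZFSet.pair α y ∈ g → (ZFSet.pair γ α ∈ E ↔ x ∈ y))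
    (y : ZFSet) :
    ∀ α, ZFSet.pair α y ∈ g → ∃ h ∈ M, Dec M E l h ∧ ZFSet.pair α y ∈ h := by
  induction y using ZFSet.inductionOn with
  | h y ih =>
  intro α hy
  have hα : α ∈ l := by
    obtain ⟨β, hβ, y', hy', e⟩ := hg.sub _ hy
    obtain ⟨rfl, rfl⟩ := ZFSet.pair_injective e
    exact hβ
  have hαM := hM.1 _ hl hα
  have ha : ZFSet.sep (fun γ => ZFSet.pair γ α ∈ E) l ∈ M :=
    model_sep hM (P := fun w => ZFSet.pair (w 0) (w 1) ∈ w 2) (Df.pairMem hM 0 1 2)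
      (v := vl [α, E]) (vl_mem hM (by simp [hαM, hEM])) hl
  obtain ⟨b, hb, hb'⟩ := model_coll hM
    (P := fun w => Dec M (w 2) (w 3) (w 0) ∧ ∃ u ∈ M, ZFSet.pair (w 1) u ∈ w 0)
    ((Df.dec hM 2 3 0).and (Df.ex (Q := fun u w => ZFSet.pair (w 1) u ∈ w 0)
      (Df.pairMem hM 2 0 1)))
    (v := vl [E, l]) (vl_mem hM (by simp [hl, hEM])) ha (by
      intro γ hγ
      rw [ZFSet.mem_sep] at hγ
      obtain ⟨x, hx, hγx⟩ := hg.tot γ hγ.1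
      obtain ⟨h, hhM, hh, hm⟩ := ih x ((hE _ _ _ _ hγx hy).1 hγ.2) γ hγx
      exact ⟨h, hhM, hh, x, (pair_left_mem hM hhM hm).2, hm⟩)
  have hb2 : ZFSet.sep (fun h => Dec M E l h) b ∈ M :=
    model_sep hM (P := fun w => Dec M (w 1) (w 2) (w 0)) (Df.dec hM 1 2 0)
      (v := vl [E, l]) (vl_mem hM (by simp [hl, hEM])) hb
  set h' := ZFSet.sUnion (ZFSet.sep (fun h => Dec M E l h) b) with hh'
  have hh'M : h' ∈ M := model_sUnion hM hb2
  have hdec : Dec M E l h' := by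
    intro p hp
    obtain ⟨k, hk, hpk⟩ := ZFSet.mem_sUnion.1 hp
    obtain ⟨α, hα, z, hz, e, h1, h2⟩ := (ZFSet.mem_sep.1 hk).2 p hpk
    refine ⟨α, hα, z, hz, e, fun γ hγ hE => ?_, fun u hu => ?_⟩
    · obtain ⟨u, hu, h3⟩ := h1 γ hγ hE
      exact ⟨u, hu, ZFSet.mem_sUnion.2 ⟨k, hk, h3⟩⟩
    · obtain ⟨γ, hγ, h3, h4⟩ := h2 u hu
      exact ⟨γ, hγ, h3, ZFSet.mem_sUnion.2 ⟨k, hk, h4⟩⟩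
  have hdom : ∀ γ ∈ l, ZFSet.pair γ α ∈ E → ∃ u, ZFSet.pair γ u ∈ h' := by
    intro γ hγ hγE
    obtain ⟨k, hk, hkd, u, hu, hku⟩ := hb' γ (ZFSet.mem_sep.2 ⟨hγ, hγE⟩)
    exact ⟨u, ZFSet.mem_sUnion.2 ⟨k, ZFSet.mem_sep.2 ⟨hk, hkd⟩, hku⟩⟩
  set z := ZFSet.sep (fun u => ∃ γ ∈ l, ZFSet.pair γ α ∈ E ∧ ZFSet.pair γ u ∈ h')
    (ZFSet.sUnion (ZFSet.sUnion h')) with hz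
  have hzM : z ∈ M :=
    model_sep hM (P := fun w => ∃ γ ∈ w 1, ZFSet.pair γ (w 2) ∈ w 3 ∧ ZFSet.pair γ (w 0) ∈ w 4)
      (Df.bex hM.1 1 (Q := fun γ w => ZFSet.pair γ (w 2) ∈ w 3 ∧ ZFSet.pair γ (w 0) ∈ w 4)
        ((Df.pairMem hM 0 3 4).and (Df.pairMem hM 0 1 5)))
      (v := vl [l, α, E, h']) (vl_mem hM (by simp [hl, hEM, hαM, hh'M]))
      (model_sUnion hM (model_sUnion hM hh'M))
  have hfin : Dec M E l (insert (ZFSet.pair α z) h') := by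
    intro p hp
    rcases ZFSet.mem_insert_iff.1 hp with rfl | hp
    · refine ⟨α, hα, z, hzM, rfl, fun γ hγ hγE => ?_, fun u hu => ?_⟩
      · obtain ⟨u, hu⟩ := hdom γ hγ hγE
        refine ⟨u, ?_, ZFSet.mem_insert_of_mem _ hu⟩
        rw [hz, ZFSet.mem_sep]
        refine ⟨ZFSet.mem_sUnion.2 ⟨{γ, u}, ZFSet.mem_sUnion.2 ⟨_, hu, by simp [ZFSet.pair]⟩,
          by simp⟩, γ, hγ, hγE, hu⟩
      · obtain ⟨γ, hγ, h3, h4⟩ := (ZFSet.mem_sep.1 hu).2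
        exact ⟨γ, hγ, h3, ZFSet.mem_insert_of_mem _ h4⟩
    · obtain ⟨α, hα, z, hz, e, h1, h2⟩ := hdec p hp
      refine ⟨α, hα, z, hz, e, fun γ hγ hE => ?_, fun u hu => ?_⟩
      · obtain ⟨u, hu, h3⟩ := h1 γ hγ hE
        exact ⟨u, hu, ZFSet.mem_insert_of_mem _ h3⟩
      · obtain ⟨γ, hγ, h3, h4⟩ := h2 u hu
        exact ⟨γ, hγ, h3, ZFSet.mem_insert_of_mem _ h4⟩
  have e := dec_unique ht hg hE hfin y α z hy (ZFSet.mem_insert _ _)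
  refine ⟨_, model_insert hM (model_pair hM hαM hzM) hh'M, hfin, ?_⟩
  rw [← e]; exact ZFSet.mem_insert _ _

/-- `c` generates `W` over `U` among countable transitive models. -/
def Gen (U c W : ZFSet) : Prop := c ∈ W ∧ ∀ W', IsCTM W' → U ⊆ W' → c ∈ W' → W ⊆ W'

theorem gen_transfer {U W X b j E : ZFSet} (hUW : U ⊆ W) (hW : IsCTM W)
    (hX : X ∈ U) (hb : b ∈ U) (hj : j ∈ U)
    (htot : ∀ p ∈ X, ∃ β ∈ b, ZFSet.pair p β ∈ j)
    (hinj : ∀ p ∈ X, ∀ p' ∈ X, ∀ β, ZFSet.pair p β ∈ j → ZFSet.pair p' β ∈ j → p = p')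
    (hEX : E ⊆ X) (hE : Gen U E W) : ∃ c, c ⊆ b ∧ Gen U c W := by
  refine ⟨ZFSet.sep (fun β => ∃ p ∈ E, ZFSet.pair p β ∈ j) b,
    fun z hz => (ZFSet.mem_sep.1 hz).1, ?_, fun W' hW' hU hc => hE.2 W' hW' hU ?_⟩
  · exact model_sep hW.1 (P := fun w => ∃ p ∈ w 1, ZFSet.pair p (w 0) ∈ w 2)
      (Df.bex hW.1.1 1 (Q := fun p w => ZFSet.pair p (w 0) ∈ w 2) (Df.pairMem hW.1 0 1 3))
      (v := vl [E, j]) (vl_mem hW.1 (by simp [hE.1, hUW hj])) (hUW hb)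
  · have := model_sep hW'.1 (P := fun w => ∃ β ∈ w 1, ZFSet.pair (w 0) β ∈ w 2)
      (Df.bex hW'.1.1 1 (Q := fun β w => ZFSet.pair (w 0) β ∈ w 2) (Df.pairMem hW'.1 1 0 3))
      (v := vl [_, j]) (vl_mem hW'.1 (by
        intro a ha
        rcases List.mem_cons.1 ha with rfl | ha
        · exact hc
        · simp at ha; subst ha; exact hU hj)) (hU hX)
    convert this using 1
    ext p
    rw [ZFSet.mem_sep]
    change _ ↔ p ∈ X ∧ ∃ β ∈ ZFSet.sep (fun β => ∃ p ∈ E, ZFSet.pair p β ∈ j) b,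
      ZFSet.pair p β ∈ j
    constructor
    · intro hp
      obtain ⟨β, hβ, h⟩ := htot p (hEX hp)
      exact ⟨hEX hp, β, ZFSet.mem_sep.2 ⟨hβ, p, hp, h⟩, h⟩
    · rintro ⟨hp, β, hβ, h⟩
      obtain ⟨p', hp', h'⟩ := (ZFSet.mem_sep.1 hβ).2
      rw [hinj p hp p' (hEX hp') β h h']; exact hp'

/-- The inverse of a relation belongs to the model. -/
theorem model_inv {M g a b : ZFSet} (hM : IsTransModel M) (hg : g ∈ M) (ha : a ∈ M) (hb : b ∈ M) :
    ∃ j ∈ M, ∀ p ∈ b, ∀ β ∈ a, (ZFSet.pair p β ∈ j ↔ ZFSet.pair β p ∈ g) := by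
  have := model_sep hM (P := fun w => ∃ p ∈ w 1, ∃ β ∈ w 2, w 0 = ZFSet.pair p β ∧
      ZFSet.pair β p ∈ w 3)
    (Df.bex hM.1 1 (Q := fun p w => ∃ β ∈ w 2, w 0 = ZFSet.pair p β ∧ ZFSet.pair β p ∈ w 3)
      (Df.bex hM.1 3 (Q := fun β w => w 1 = ZFSet.pair (w 0) β ∧ ZFSet.pair β (w 0) ∈ w 4)
        ((Df.pairEq hM 2 1 0).and (Df.pairMem hM 0 1 5))))
    (v := vl [b, a, g]) (vl_mem hM (by simp [hg, ha, hb])) (model_prod hM hb ha)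
  refine ⟨_, this, fun p hp β hβ => ?_⟩
  rw [ZFSet.mem_sep]
  change _ ∧ (∃ p' ∈ b, ∃ β' ∈ a, ZFSet.pair p β = ZFSet.pair p' β' ∧ ZFSet.pair β' p' ∈ g) ↔ _
  constructor
  · rintro ⟨-, p', -, β', -, e, h⟩
    obtain ⟨rfl, rfl⟩ := ZFSet.pair_injective e
    exact h
  · intro h
    exact ⟨ZFSet.pair_mem_prod.2 ⟨hp, hβ⟩, p, hp, β, hβ, rfl, h⟩

theorem exists_gen_ord {U W : ZFSet} (h : IsSmallExt U W) :
    ∃ k ∈ U, IsOrd k ∧ ∃ c, c ⊆ k ∧ Gen U c W := by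
  obtain ⟨⟨hU, hW, hUW, hord⟩, m, hm, hgen⟩ := h
  obtain ⟨t, htW, ht, hmt⟩ := model_trcl hW.1 m hm
  obtain ⟨l, hlW, hl, g, hgW, hg⟩ := model_wo hW.1 htW
  have hlU := hord l hlW hl
  have hEW : ZFSet.sep (fun p => ∃ γ ∈ l, ∃ α ∈ l, p = ZFSet.pair γ α ∧ ∃ x ∈ t, ∃ y ∈ t,
      ZFSet.pair γ x ∈ g ∧ ZFSet.pair α y ∈ g ∧ x ∈ y) (ZFSet.prod l l) ∈ W :=
    model_sep hW.1 (P := fun w => ∃ γ ∈ w 1, ∃ α ∈ w 1, w 0 = ZFSet.pair γ α ∧ ∃ x ∈ w 2, ∃ y ∈ w 2,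
      ZFSet.pair γ x ∈ w 3 ∧ ZFSet.pair α y ∈ w 3 ∧ x ∈ y)
    (Df.bex hW.1.1 1 (Q := fun γ w => ∃ α ∈ w 1, w 0 = ZFSet.pair γ α ∧ ∃ x ∈ w 2, ∃ y ∈ w 2,
      ZFSet.pair γ x ∈ w 3 ∧ ZFSet.pair α y ∈ w 3 ∧ x ∈ y)
      (Df.bex hW.1.1 2 (Q := fun α w => w 1 = ZFSet.pair (w 0) α ∧ ∃ x ∈ w 3, ∃ y ∈ w 3,
        ZFSet.pair (w 0) x ∈ w 4 ∧ ZFSet.pair α y ∈ w 4 ∧ x ∈ y)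
        ((Df.pairEq hW.1 2 1 0).and
          (Df.bex hW.1.1 4 (Q := fun x w => ∃ y ∈ w 4,
            ZFSet.pair (w 1) x ∈ w 5 ∧ ZFSet.pair (w 0) y ∈ w 5 ∧ x ∈ y)
            (Df.bex hW.1.1 5 (Q := fun y w =>
              ZFSet.pair (w 2) (w 0) ∈ w 6 ∧ ZFSet.pair (w 1) y ∈ w 6 ∧ w 0 ∈ y)
              ((Df.pairMem hW.1 3 1 7).and ((Df.pairMem hW.1 2 0 7).and (Df.mem 1 0))))))))
    (v := vl [l, t, g]) (vl_mem hW.1 (by simp [hlW, htW, hgW])) (model_prod hW.1 hlW hlW)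
  set E := ZFSet.sep (fun p => ∃ γ ∈ l, ∃ α ∈ l, p = ZFSet.pair γ α ∧ ∃ x ∈ t, ∃ y ∈ t,
      ZFSet.pair γ x ∈ g ∧ ZFSet.pair α y ∈ g ∧ x ∈ y) (ZFSet.prod l l) with hEdef
  have hgm : ∀ γ x, ZFSet.pair γ x ∈ g → γ ∈ l ∧ x ∈ t := by
    intro γ x h
    obtain ⟨β, hβ, y', hy', e⟩ := hg.sub _ h
    obtain ⟨rfl, rfl⟩ := ZFSet.pair_injective e
    exact ⟨hβ, hy'⟩
  have hE : ∀ γ α x y, ZFSet.pair γ x ∈ g → ZFSet.pair α y ∈ g →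
      (ZFSet.pair γ α ∈ E ↔ x ∈ y) := by
    intro γ α x y h1 h2
    rw [hEdef, ZFSet.mem_sep]
    constructor
    · rintro ⟨-, γ', -, α', -, e, x', hx', y', hy', k1, k2, k3⟩
      obtain ⟨rfl, rfl⟩ := ZFSet.pair_injective e
      have e1 : x = x' := hg.func _ _ _ h1 k1
      have e2 : y = y' := hg.func _ _ _ h2 k2
      rw [e1, e2]; exact k3
    · intro hxy
      exact ⟨ZFSet.pair_mem_prod.2 ⟨(hgm _ _ h1).1, (hgm _ _ h2).1⟩, γ, (hgm _ _ h1).1, α,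
        (hgm _ _ h2).1, rfl, x, (hgm _ _ h1).2, y, (hgm _ _ h2).2, h1, h2, hxy⟩
  have hGenE : Gen U E W := by
    refine ⟨hEW, fun W' hW' hUW' hEW' => hgen W' hW' hUW' ?_⟩
    obtain ⟨α, hα, hαm⟩ := hg.surj m hmt
    obtain ⟨h, hh, -, hmem⟩ := dec_exists hW'.1 hEW' (hUW' hlU) ht hg hE m α hαm
    exact (pair_left_mem hW'.1 hh hmem).2
  have hXU := model_prod hU.1 hlU hlU
  obtain ⟨k, hkU, hk, f, hfU, hf⟩ := model_wo hU.1 hXU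
  obtain ⟨j, hjU, hj⟩ := model_inv hU.1 hfU hkU hXU
  have hjinv := hj
  have hsubE : E ⊆ ZFSet.prod l l := fun z hz => (ZFSet.mem_sep.1 hz).1
  -- restrict the inverse to pairs landing in `k`
  obtain ⟨j', hj'U, hj'⟩ : ∃ j' ∈ U, ∀ p β, ZFSet.pair p β ∈ j' ↔
      ZFSet.pair p β ∈ j ∧ ZFSet.pair p β ∈ ZFSet.prod (ZFSet.prod l l) k := by
    refine ⟨ZFSet.sep (fun p => p ∈ j) (ZFSet.prod (ZFSet.prod l l) k),
      model_sep hU.1 (P := fun w => w 0 ∈ w 1) (Df.mem 0 1) (v := vl [j])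
      (vl_mem hU.1 (by simp [hjU])) (model_prod hU.1 hXU hkU), fun p β => ?_⟩
    rw [ZFSet.mem_sep, and_comm]
  refine ⟨k, hkU, hk, gen_transfer (X := ZFSet.prod l l) (j := j') hUW hW hXU hkU hj'U ?_ ?_
    hsubE hGenE⟩
  · intro p hp
    obtain ⟨β, hβ, h⟩ := hf.surj p hp
    exact ⟨β, hβ, (hj' _ _).2 ⟨(hj p hp β hβ).2 h, ZFSet.pair_mem_prod.2 ⟨hp, hβ⟩⟩⟩
  · intro p hp p' hp' β h h'
    have hβ := (ZFSet.pair_mem_prod.1 ((hj' _ _).1 h).2).2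
    exact hf.func _ _ _ ((hj p hp β hβ).1 ((hj' _ _).1 h).1)
      ((hj p' hp' β hβ).1 ((hj' _ _).1 h').1)

theorem main_aux (U W : ZFSet) (hW : IsSmallExt U W) :
    ∃ k, k ∈ U ∧ IsCardinalIn U k ∧
      ∃ c, c ⊆ k ∧ (∀ b ∈ k, ∃ g ∈ c, b ∈ g ∨ b = g) ∧ Generates U c W := by
  obtain ⟨k, ⟨hkU, hk, c, hck, hc⟩, hmin⟩ := ZFSet.mem_wf.has_min
    {k : ZFSet | k ∈ U ∧ IsOrd k ∧ ∃ c, c ⊆ k ∧ Gen U c W} (exists_gen_ord hW)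
  have hmin' : ∀ b ∈ k, ¬ ∃ c, c ⊆ b ∧ Gen U c W := fun b hb h =>
    hmin b ⟨hW.1.1.1.1 _ hkU hb, hk.mem hb, h⟩ hb
  refine ⟨k, hkU, ⟨hkU, hk, ?_⟩, c, hck, ?_, hW.1, hc.1, hc.2⟩
  · rintro b hb ⟨j, hjU, hj1, hj2, hj3⟩
    have hspec : ∀ s ∈ k, ZFSet.pair s (iapp j s) ∈ j := fun s hs =>
      Classical.epsilon_spec (p := fun v => opair s v ∈ j) (hj1.2 s hs).exists
    refine hmin' b hb (gen_transfer hW.1.2.2.1 hW.1.2.1 hkU (hW.1.1.1.1 _ hkU hb) hjU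
      (fun p hp => ⟨_, hj2 p hp, hspec p hp⟩) ?_ hck hc)
    intro p hp p' hp' β h h'
    apply hj3 p hp p' hp'
    rw [(hj1.2 p hp).unique (hspec p hp) h, (hj1.2 p' hp').unique (hspec p' hp') h']
  · intro b hb
    by_contra hcon
    refine hmin' b hb ⟨c, fun x hx => ?_, hc⟩
    by_contra hxb
    apply hcon
    refine ⟨x, hx, ?_⟩
    rcases (hk.mem hb).isOrdinal.mem_trichotomous (hk.mem (hck hx)).isOrdinal with h | h | h
    · exact Or.inl h
    · exact Or.inr h
    · exact absurd h hxb

end SmallExt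

open SmallExt in
/-- Every small extension `W` of a CTM `U` is generated
from `U` by an unbounded subset of some ordinal `κ ∈ U` which is a cardinal
in `U`. -/
theorem small_extension_generated_by_unbounded_set
    (U W : ZFSet) (hU : IsCTM U) (hW : IsSmallExt U W) :
    ∃ k, k ∈ U ∧ IsCardinalIn U k ∧
      ∃ c, c ⊆ k ∧ (∀ b ∈ k, ∃ g ∈ c, b ∈ g ∨ b = g) ∧ Generates U c W := by
  exact main_aux U W hW
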